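/- arXiv:2010.12958 — 7 statements merged into one kernel-verified Lean document; each statement's English description precedes it below -/
import Mathlib

section
/- Let G be a discrete group and let H be a normal subgroup of G. If Sub^c_H is closed in Sub_H and Sub^c_{G/H} is closed in Sub_{G/H}, then Sub^c_G is closed in Sub_G. In particular, if H has finite index in G and Sub^c_H is closed in Sub_H, then Sub^c_G is closed in Sub_G. -/
/-- The Chabauty topology on the space of subgroups of a discrete group `G`:
it is generated by the sub-basic sets `{H | H ∩ K = ∅}` for `K` finite (= compact in a
discrete group) and `{H | H ∩ U ≠ ∅}` for arbitrary `U` (= open in a discrete group). -/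
instance chabautyTopology (G : Type*) [Group G] : TopologicalSpace (Subgroup G) :=
  TopologicalSpace.generateFrom
    ({S | ∃ K : Set G, K.Finite ∧ S = {H : Subgroup G | (H : Set G) ∩ K = ∅}} ∪
     {S | ∃ U : Set G, S = {H : Subgroup G | ((H : Set G) ∩ U).Nonempty}})

/-- `Sub^c_G`: the set of cyclic subgroups of a (discrete) group `G`. -/
def cyclicSubgroups (G : Type*) [Group G] : Set (Subgroup G) :=
  {H : Subgroup G | ∃ x : G, H = Subgroup.zpowers x}

/-- `Sub^a_G`: the set of abelian subgroups of a (discrete) group `G`. -/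
def abelianSubgroups (G : Type*) [Group G] : Set (Subgroup G) :=
  {H : Subgroup G | ∀ a ∈ H, ∀ b ∈ H, a * b = b * a}

/-- The image of a subgroup under the `n`-th power (`n : ℤ`) of an automorphism. -/
def autMap {G : Type*} [Group G] (T : MulAut G) (n : ℤ) (H : Subgroup G) : Subgroup G :=
  Subgroup.map (T ^ n).toMonoidHom H

/-- The orbit of a pair of subgroups under the powers of an automorphism. -/
def orbitPairs {G : Type*} [Group G] (T : MulAut G) (A B : Subgroup G) :
    Set (Subgroup G × Subgroup G) :=
  Set.range fun n : ℤ => (autMap T n A, autMap T n B)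

/-- The automorphism `T` acts distally on the (`T`-invariant) subset `Y` of `Sub_G`:
for distinct `A, B ∈ Y`, the closure of the orbit of `(A, B)` does not meet
the diagonal of `Y`. -/
def ActsDistallyOn {G : Type*} [Group G] (T : MulAut G) (Y : Set (Subgroup G)) : Prop :=
  ∀ A ∈ Y, ∀ B ∈ Y, A ≠ B → ∀ C ∈ Y, (C, C) ∉ closure (orbitPairs T A B)

/-- The automorphism `T` acts expansively on the compact (`T`-invariant) subset `Y` of
`Sub_G`: there is a neighbourhood `W` of the diagonal (an entourage for the unique
uniformity of the compact Hausdorff space `Y`, equivalently `d < δ` for an expansivity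
constant `δ` of a compatible metric `d`) such that any two distinct points of `Y` are
separated outside of `W` by some power of `T`. -/
def ActsExpansivelyOn {G : Type*} [Group G] (T : MulAut G) (Y : Set (Subgroup G)) : Prop :=
  ∃ W : Set (Subgroup G × Subgroup G), IsOpen W ∧ (∀ A ∈ Y, (A, A) ∈ W) ∧
    ∀ A ∈ Y, ∀ B ∈ Y, A ≠ B → ∃ n : ℤ, (autMap T n A, autMap T n B) ∉ W

/-- An automorphism `T` of a discrete group `G` belongs to class (NC) if for every
nontrivial cyclic subgroup `A` of `G`, no sequence `T^{n_k}(A)` converges to the trivial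
subgroup in the Chabauty topology. -/
def ClassNC {G : Type*} [Group G] (T : MulAut G) : Prop :=
  ∀ A ∈ cyclicSubgroups G, A ≠ ⊥ →
    ∀ n : ℕ → ℤ, ¬ Filter.Tendsto (fun k => autMap T (n k) A) Filter.atTop (nhds ⊥)

/-- A group is polycyclic if it has a finite subnormal series with cyclic quotients. -/
def IsPolycyclic (G : Type*) [Group G] : Prop :=
  ∃ (k : ℕ) (s : Fin (k + 1) → Subgroup G),
    s 0 = ⊤ ∧ s (Fin.last k) = ⊥ ∧
    ∀ i : Fin k, s i.succ ≤ s i.castSucc ∧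
      ∃ hn : ((s i.succ).subgroupOf (s i.castSucc)).Normal,
        haveI := hn
        IsCyclic (↥(s i.castSucc) ⧸ (s i.succ).subgroupOf (s i.castSucc))

/-- A subgroup `A` is locally cyclic: each finite subset lies in a cyclic subgroup of `A`. -/
def LocCyc {G : Type*} [Group G] (A : Subgroup G) : Prop :=
  ∀ F : Set G, F.Finite → F ⊆ A → ∃ x ∈ A, F ⊆ Subgroup.zpowers x

theorem exists_zpowers_of_le {G : Type*} [Group G] {A : Subgroup G} {x : G}
    (h : A ≤ Subgroup.zpowers x) : ∃ y ∈ A, A = Subgroup.zpowers y := by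
  have : IsCyclic A := Subgroup.isCyclic_of_le h
  obtain ⟨y, hy⟩ := (Subgroup.isCyclic_iff_exists_zpowers_eq_top A).1 this
  exact ⟨y, hy ▸ Subgroup.mem_zpowers y, hy.symm⟩

theorem locCyc_of_weak {G : Type*} [Group G] {A : Subgroup G}
    (h : ∀ F : Set G, F.Finite → F ⊆ A → ∃ x : G, F ⊆ Subgroup.zpowers x) : LocCyc A := by
  intro F hF hFA
  obtain ⟨x, hx⟩ := h F hF hFA
  obtain ⟨y, hy, e⟩ := exists_zpowers_of_le ((Subgroup.closure_le _).2 hx)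
  refine ⟨y, (Subgroup.closure_le _).2 hFA hy, ?_⟩
  rw [← e]
  exact Subgroup.subset_closure

theorem isOpen_mem {G : Type*} [Group G] (g : G) : IsOpen {B : Subgroup G | g ∈ B} := by
  apply TopologicalSpace.isOpen_generateFrom_of_mem
  right
  refine ⟨{g}, ?_⟩
  ext B
  simp

theorem isOpen_superset {G : Type*} [Group G] {F : Set G} (hF : F.Finite) :
    IsOpen {B : Subgroup G | F ⊆ B} := by
  have : {B : Subgroup G | F ⊆ B} = ⋂ g ∈ F, {B : Subgroup G | g ∈ B} := by
    ext B
    simp [Set.subset_def]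
  rw [this]
  exact hF.isOpen_biInter fun g _ => isOpen_mem g

theorem tendsto_closure {G : Type*} [Group G] (A : Subgroup G) :
    Filter.Tendsto (fun F : Finset A => Subgroup.closure ((fun a : A => (a : G)) '' (F : Set A)))
      Filter.atTop (nhds A) := by
  have hle : ∀ F : Finset A, Subgroup.closure ((fun a : A => (a : G)) '' (F : Set A)) ≤ A := by
    intro F
    rw [Subgroup.closure_le]
    rintro _ ⟨a, _, rfl⟩
    exact a.2
  refine TopologicalSpace.tendsto_nhds_generateFrom_iff.2 ?_
  rintro S (⟨K, _, rfl⟩ | ⟨U, rfl⟩) hA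
  · refine Filter.Eventually.of_forall fun F => ?_
    exact Set.subset_eq_empty (Set.inter_subset_inter_left K (hle F)) hA
  · obtain ⟨u, huA, huU⟩ := hA
    filter_upwards [Filter.eventually_ge_atTop ({⟨u, huA⟩} : Finset A)] with F hF
    refine ⟨u, Subgroup.subset_closure ⟨⟨u, huA⟩, ?_, rfl⟩, huU⟩
    exact hF (Finset.mem_singleton_self _)

theorem isClosed_cyclic_iff {G : Type*} [Group G] :
    IsClosed (cyclicSubgroups G) ↔ ∀ A : Subgroup G, LocCyc A → A ∈ cyclicSubgroups G := by
  constructor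
  · intro hc A hA
    refine hc.mem_of_tendsto (tendsto_closure A) (Filter.Eventually.of_forall fun F => ?_)
    obtain ⟨x, -, hx⟩ := hA _ (F.finite_toSet.image (fun a : A => (a : G)))
      (by rintro _ ⟨a, _, rfl⟩; exact a.2)
    obtain ⟨y, -, e⟩ := exists_zpowers_of_le ((Subgroup.closure_le _).2 hx)
    exact ⟨y, e⟩
  · intro h
    refine isClosed_of_closure_subset fun A hA => h A (locCyc_of_weak fun F hF hFA => ?_)
    obtain ⟨B, hB, x, rfl⟩ := mem_closure_iff.1 hA _ (isOpen_superset hF) hFA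
    exact ⟨x, hB⟩

theorem closed_aux {G : Type*} [Group G] (H : Subgroup G) [H.Normal]
    (h1 : IsClosed (cyclicSubgroups ↥H)) (h2 : IsClosed (cyclicSubgroups (G ⧸ H))) :
    IsClosed (cyclicSubgroups G) := by
  rw [isClosed_cyclic_iff] at *
  intro A hA
  obtain ⟨h, hh⟩ := h1 (A.subgroupOf H) (locCyc_of_weak fun F hF hFA => by
    obtain ⟨x, -, hx⟩ := hA _ (hF.image (fun a : H => (a : G)))
      (by rintro _ ⟨a, ha, rfl⟩; exact hFA ha)
    obtain ⟨y, hy, e⟩ := exists_zpowers_of_le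
      (inf_le_left : Subgroup.zpowers x ⊓ H ≤ Subgroup.zpowers x)
    refine ⟨⟨y, hy.2⟩, fun f hf => ?_⟩
    have : (f : G) ∈ Subgroup.zpowers y := e ▸ ⟨hx ⟨f, hf, rfl⟩, f.2⟩
    obtain ⟨n, hn⟩ := this
    exact ⟨n, Subtype.ext (by simpa using hn)⟩)
  obtain ⟨q, hq⟩ := h2 (A.map (QuotientGroup.mk' H)) (locCyc_of_weak fun F hF hFA => by
    obtain ⟨F', hF'A, hF', rfl⟩ := Set.exists_subset_image_finite_and.1
      ⟨F, hFA, hF, rfl⟩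
    obtain ⟨x, -, hx⟩ := hA F' hF' hF'A
    refine ⟨QuotientGroup.mk' H x, ?_⟩
    rintro _ ⟨f, hf, rfl⟩
    obtain ⟨n, hn⟩ := hx hf
    exact ⟨n, by simp [← hn]⟩)
  have hqm : q ∈ A.map (QuotientGroup.mk' H) := hq ▸ Subgroup.mem_zpowers q
  obtain ⟨a, haA, rfl⟩ := hqm
  have hhA : (h : G) ∈ A := by
    have : h ∈ A.subgroupOf H := hh ▸ Subgroup.mem_zpowers h
    exact this
  obtain ⟨x, hxA, hx⟩ := hA {(h : G), a} (Set.toFinite _) (by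
    rintro _ (rfl | rfl)
    · exact hhA
    · exact haA)
  have hhx : (h : G) ∈ Subgroup.zpowers x := hx (by simp)
  have hax : a ∈ Subgroup.zpowers x := hx (by simp)
  refine ⟨x, le_antisymm (fun b hb => ?_) (by simpa using hxA)⟩
  have hb' : QuotientGroup.mk' H b ∈ Subgroup.zpowers (QuotientGroup.mk' H a) :=
    hq ▸ Subgroup.mem_map_of_mem _ hb
  obtain ⟨n, hn⟩ := hb'
  have hn' : ((a ^ n : G) : G ⧸ H) = (b : G ⧸ H) := by simpa using hn
  have hmem : (a ^ n)⁻¹ * b ∈ H := QuotientGroup.eq.1 hn'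
  have hmem' : (⟨_, hmem⟩ : H) ∈ A.subgroupOf H :=
    A.mul_mem (A.inv_mem (A.zpow_mem haA n)) hb
  rw [hh] at hmem'
  obtain ⟨m, hm⟩ := hmem'
  have hm' : (h : G) ^ m = (a ^ n)⁻¹ * b := by simpa using congrArg Subtype.val hm
  have : b = a ^ n * (h : G) ^ m := by rw [hm']; group
  rw [this]
  exact Subgroup.mul_mem _ (Subgroup.zpow_mem _ hax n) (Subgroup.zpow_mem _ hhx m)

/-- if `Sub^c_H` and `Sub^c_{G/H}` are closed, then `Sub^c_G` is closed;
in particular this holds when `H` has finite index and `Sub^c_H` is closed. -/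
theorem cyclicSubgroups_isClosed_of_normal {G : Type*} [Group G]
    (H : Subgroup G) [H.Normal] :
    (IsClosed (cyclicSubgroups ↥H) → IsClosed (cyclicSubgroups (G ⧸ H)) →
      IsClosed (cyclicSubgroups G)) ∧
    (H.FiniteIndex → IsClosed (cyclicSubgroups ↥H) → IsClosed (cyclicSubgroups G)) := by
  refine ⟨closed_aux H, fun hfi h1 => closed_aux H h1 ?_⟩
  rw [isClosed_cyclic_iff]
  intro A hA
  obtain ⟨x, hxA, hx⟩ := hA A (Set.toFinite _) subset_rfl
  exact ⟨x, le_antisymm hx (by simpa using hxA)⟩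
end

section
/- Let G be a discrete group and let T be an automorphism of G belonging to class (NC). Let H be a normal subgroup of G with T|_H = Id, and let x be a nontrivial torsion element of G with T(x) ∈ xH. Then there exist integers l, n ≥ 1 such that x^l ≠ e and T^n(x^l) = x^l. Moreover, if the center Z(H) of H is finitely generated and m is the order of the unique maximal finite subgroup of Z(H), then for every nontrivial torsion element x ∈ G with T(x) ∈ xH there exists an integer l ≥ 1 (depending on x) such that T^m(x^l) = x^l ≠ e. -/
theorem nc_aux_part1 {G : Type*} [Group G] (T : MulAut G)
    (hT : ClassNC T) (x : G) (hx : x ≠ 1) (hfin : IsOfFinOrder x) :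
    ∃ l n : ℕ, 0 < l ∧ 0 < n ∧ x ^ l ≠ 1 ∧ (T ^ n) (x ^ l) = x ^ l := by
  by_contra hcon
  refine hT (Subgroup.zpowers x) ⟨x, rfl⟩ (by simpa using hx) (fun k => (k : ℤ)) ?_
  have key : ∀ g : G, g ≠ 1 → ∀ᶠ k : ℕ in Filter.atTop,
      g ∉ autMap T (k : ℤ) (Subgroup.zpowers x) := by
    intro g hg
    have hA : ((Subgroup.zpowers x : Subgroup G) : Set G).Finite := 
      hfin.finite_zpowers
    have hinj : Set.InjOn (fun k : ℕ => (T ^ k)⁻¹ g)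
        ((fun k : ℕ => (T ^ k)⁻¹ g) ⁻¹' (Subgroup.zpowers x : Set G)) := by
      have main : ∀ k k' : ℕ, (T ^ k)⁻¹ g ∈ Subgroup.zpowers x →
          (T ^ k)⁻¹ g = (T ^ k')⁻¹ g → k < k' → False := by
        intro k k' hk he hlt
        obtain ⟨l, hl⟩ := (hfin.mem_powers_iff_mem_zpowers).2 hk
        obtain ⟨d, rfl⟩ := Nat.exists_eq_add_of_lt hlt
        simp only at hl
        have hne : x ^ l ≠ 1 := by
          rw [hl]
          intro h
          apply hg
          have := congrArg (T ^ k) h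
          simpa using this
        have hl0 : 0 < l := by
          rcases Nat.eq_zero_or_pos l with h | h
          · subst h; simp at hne
          · exact h
        refine hcon ⟨l, d + 1, hl0, Nat.succ_pos d, hne, ?_⟩
        have h2 : (T ^ (k + d + 1))⁻¹ g = (T ^ (d + 1))⁻¹ ((T ^ k)⁻¹ g) := by
          rw [← MulAut.mul_apply, ← mul_inv_rev, ← pow_add, add_assoc]
        rw [hl]
        rw [h2] at he
        conv_lhs => rw [he]
        simp
      intro k hk k' hk' he
      rcases lt_trichotomy k k' with h | h | h
      · exact (main k k' hk he h).elim
      · exact h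
      · exact (main k' k hk' he.symm h).elim
    have hf := Set.Finite.preimage hinj hA
    rw [← Nat.cofinite_eq_atTop]
    refine Set.Finite.subset hf ?_
    intro k hk
    simp only [Set.mem_compl_iff, Set.mem_ofPred_eq, not_not, autMap] at hk
    obtain ⟨a, ha, rfl⟩ := hk
    simpa using ha
  refine TopologicalSpace.tendsto_nhds_generateFrom_iff.2 ?_
  rintro s (⟨K, hK, rfl⟩ | ⟨U, rfl⟩) hs
  · have h1 : (1 : G) ∉ K := by
      intro h
      have : (1 : G) ∈ (((⊥ : Subgroup G) : Set G) ∩ K) := ⟨Subgroup.one_mem _, h⟩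
      rw [hs] at this
      exact this
    have := (Filter.eventually_all_finite hK).2
      (fun g hg => key g (fun h => h1 (h ▸ hg)))
    filter_upwards [this] with k hk
    ext g
    simp only [Set.mem_inter_iff, Set.mem_empty_iff_false, iff_false, not_and]
    exact fun h1 h2 => hk g h2 h1
  · obtain ⟨g, hg, hgU⟩ := hs
    have hg1 : g = 1 := by simpa using hg
    subst hg1
    exact Filter.Eventually.of_forall fun k => ⟨1, Subgroup.one_mem _, hgU⟩

/-- for `T` in class (NC) restricting to the identity on a normal subgroup
`H` and a nontrivial torsion element `x` with `T(x) ∈ xH`, some nontrivial power `x^l`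
is fixed by some `T^n`; if moreover `Z(H)` is finitely generated with maximal finite
subgroup of order `m`, then `T^m(x^l) = x^l ≠ e` for some `l ≥ 1`. -/
theorem classNC_fixes_power_of_torsion {G : Type*} [Group G] (T : MulAut G)
    (hT : ClassNC T) (H : Subgroup G) [H.Normal] (hid : ∀ h ∈ H, T h = h) :
    (∀ x : G, x ≠ 1 → IsOfFinOrder x → x⁻¹ * T x ∈ H →
      ∃ l n : ℕ, 0 < l ∧ 0 < n ∧ x ^ l ≠ 1 ∧ (T ^ n) (x ^ l) = x ^ l) ∧
    (Group.FG ↥(H ⊓ Subgroup.centralizer (H : Set G)) →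
      ∀ F : Subgroup G, F ≤ H ⊓ Subgroup.centralizer (H : Set G) → Finite ↥F →
        (∀ F' : Subgroup G, F' ≤ H ⊓ Subgroup.centralizer (H : Set G) → Finite ↥F' →
          F' ≤ F) →
        ∀ x : G, x ≠ 1 → IsOfFinOrder x → x⁻¹ * T x ∈ H →
          ∃ l : ℕ, 0 < l ∧ x ^ l ≠ 1 ∧ (T ^ Nat.card ↥F) (x ^ l) = x ^ l) := by
  refine ⟨fun x hx hf _ => nc_aux_part1 T hT x hx hf, ?_⟩
  intro _ F _ _ hmax x hx hf hxH
  obtain ⟨l, n, hl, hn, hne, hfix⟩ := nc_aux_part1 T hT x hx hf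
  refine ⟨l, hl, hne, ?_⟩
  have hyH : (x ^ l)⁻¹ * T (x ^ l) ∈ H := by
    rw [← QuotientGroup.eq] at hxH ⊢
    rw [map_pow, QuotientGroup.mk_pow, QuotientGroup.mk_pow, hxH]
  generalize x ^ l = y at *
  obtain ⟨h, hh⟩ : ∃ h, h = y⁻¹ * T y := ⟨_, rfl⟩
  rw [← hh] at hyH
  have hTy : T y = y * h := by rw [hh]; group
  have hpow : ∀ k : ℕ, (T ^ k) y = y * h ^ k := by
    intro k
    induction k with
    | zero => simp
    | succ k ih =>
      rw [pow_succ', MulAut.mul_apply, ih, map_mul, map_pow, hid h hyH, hTy, pow_succ',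
        mul_assoc]
  have hhn : h ^ n = 1 := by
    have := hpow n
    rw [hfix] at this
    simpa using this
  have hcent : h ∈ Subgroup.centralizer (H : Set G) := by
    rw [Subgroup.mem_centralizer_iff]
    intro k hk
    have h1 : y * k * y⁻¹ ∈ H := Subgroup.Normal.conj_mem inferInstance k hk y
    have h2 := hid _ h1
    rw [map_mul, map_mul, map_inv, hid k hk, hTy] at h2
    have h3 : h * k * h⁻¹ = k := by
      have := congrArg (fun z => y⁻¹ * z * y) h2
      simpa [mul_assoc] using this
    exact (mul_inv_eq_iff_eq_mul.1 h3).symm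
  have hhf : IsOfFinOrder h := isOfFinOrder_iff_pow_eq_one.2 ⟨n, hn, hhn⟩
  have hF : h ∈ F := by
    refine hmax (Subgroup.zpowers h) ?_ ?_ (Subgroup.mem_zpowers h)
    · rw [Subgroup.zpowers_le]
      exact ⟨hyH, hcent⟩
    · exact hhf.finite_zpowers
  have hm : h ^ Nat.card ↥F = 1 := by
    have := pow_card_eq_one' (x := (⟨h, hF⟩ : F))
    exact congrArg Subtype.val this
  rw [hpow, hm, mul_one]
end

section
/- Let G be a discrete group and let H be a normal subgroup of finite index in G such that the center Z(H) of H is finitely generated. Let T be an automorphism of G belonging to class (NC) with T|_H = Id. Then there exists an integer m ≥ 1 such that G' = {g ∈ G : T^m(g) = g} is a subgroup of finite index in G, H ⊆ G', T^m acts trivially on G/Z(H) (i.e., T^m(g) ∈ g·Z(H) for all g ∈ G), and the following hold: for every nontrivial element x ∈ G, the cyclic subgroup generated by x intersects G' nontrivially; moreover, if x ∉ G', then the set {T^n(x) : n ∈ ℕ} is infinite. -/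
theorem aux_pow_apply {G : Type*} [Group G] (H : Subgroup G) (S : MulAut G)
    (hid : ∀ h ∈ H, S h = h) (g : G) (hg : g⁻¹ * S g ∈ H) (n : ℕ) :
    (S ^ n) g = g * (g⁻¹ * S g) ^ n := by
  induction n with
  | zero => simp
  | succ k ih =>
    rw [pow_succ', MulAut.mul_apply, ih, map_mul, hid _ (H.pow_mem hg k), pow_succ', ← mul_assoc, mul_inv_cancel_left]

theorem aux_pow_fix {G : Type*} [Group G] (H : Subgroup G) (S : MulAut G)
    (hid : ∀ h ∈ H, S h = h) (n : ℕ) : ∀ h ∈ H, (S ^ n) h = h := by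
  induction n with
  | zero => simp
  | succ k ih =>
    intro h hh
    rw [pow_succ', MulAut.mul_apply, ih h hh, hid h hh]

theorem aux_m0 {G : Type*} [Group G] (H : Subgroup G) [H.Normal] (hfi : H.FiniteIndex)
    (T : MulAut G) (hid : ∀ h ∈ H, T h = h) :
    ∃ m : ℕ, 0 < m ∧ ∀ g : G, g⁻¹ * (T ^ m) g ∈ H := by
  have : Finite (G ⧸ H) := Subgroup.finite_quotient_of_finiteIndex
  obtain ⟨a, b, hab, hf⟩ := Finite.exists_ne_map_eq_of_infinite
    (fun n : ℕ => fun q : G ⧸ H => (((T ^ n) q.out : G) : G ⧸ H))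
  wlog hlt : a < b generalizing a b
  · exact this b a hab.symm hf.symm (by omega)
  refine ⟨b - a, by omega, fun g => ?_⟩
  have hb : T ^ b = T ^ a * T ^ (b - a) := by rw [← pow_add]; congr 1; omega
  have key : ∀ q : G ⧸ H, (q.out)⁻¹ * (T ^ (b - a)) q.out ∈ H := by
    intro q
    have h1 := congrFun hf q
    rw [QuotientGroup.eq, hb, MulAut.mul_apply, ← map_inv, ← map_mul] at h1
    have h2 := aux_pow_fix H T hid a _ h1
    rw [(T ^ a).injective h2] at h1
    exact h1
  obtain ⟨h, hh⟩ := QuotientGroup.mk_out_eq_mul H g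
  have hk := key (g : G ⧸ H)
  rw [hh, map_mul, aux_pow_fix H T hid _ _ h.2] at hk
  have := Subgroup.Normal.conj_mem ‹H.Normal› _ hk h
  convert this using 1
  group

theorem aux_cent {G : Type*} [Group G] (H : Subgroup G) [H.Normal]
    (S : MulAut G) (hid : ∀ h ∈ H, S h = h) (g : G) :
    g⁻¹ * S g ∈ Subgroup.centralizer (H : Set G) := by
  rw [Subgroup.mem_centralizer_iff]
  intro h hh
  have h1 := hid _ (Subgroup.Normal.conj_mem ‹H.Normal› h hh g)
  rw [map_mul, map_mul, hid h hh, map_inv] at h1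
  have h2 : S g * h = g * h * g⁻¹ * S g := by rw [← h1]; group
  rw [mul_assoc g⁻¹, h2]
  group

theorem aux_m {G : Type*} [Group G] (H : Subgroup G) [H.Normal] (hfi : H.FiniteIndex)
    (T : MulAut G) (hid : ∀ h ∈ H, T h = h) :
    ∃ m : ℕ, 0 < m ∧ ∀ g : G, g⁻¹ * (T ^ m) g ∈ H ∧
      ((T ^ m) g = g ∨ orderOf (g⁻¹ * (T ^ m) g) = 0) := by
  have : Finite (G ⧸ H) := Subgroup.finite_quotient_of_finiteIndex
  have := Fintype.ofFinite (G ⧸ H)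
  obtain ⟨m, hm, hmH⟩ := aux_m0 H hfi T hid
  have hS := aux_pow_fix H T hid m
  set S := T ^ m with hSdef
  let o : G ⧸ H → ℕ := fun q =>
    if orderOf (q.out⁻¹ * S q.out) = 0 then 1 else orderOf (q.out⁻¹ * S q.out)
  have ho : ∀ q, 0 < o q := by
    intro q
    simp only [o]
    split_ifs <;> omega
  have hl : 0 < ∏ q, o q := Finset.prod_pos fun q _ => ho q
  refine ⟨m * ∏ q, o q, Nat.mul_pos hm hl, fun g => ?_⟩
  have hval : g⁻¹ * (T ^ (m * ∏ q, o q)) g = (g⁻¹ * S g) ^ (∏ q, o q) := by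
    rw [pow_mul, ← hSdef, aux_pow_apply H S hS g (hmH g)]
    group
  have hout : ((g : G ⧸ H).out)⁻¹ * S ((g : G ⧸ H).out) = g⁻¹ * S g := by
    obtain ⟨h, hh⟩ := QuotientGroup.mk_out_eq_mul H g
    have hc := (Subgroup.mem_centralizer_iff.1 (aux_cent H S hS g)) h h.2
    rw [hh, map_mul, hS _ h.2]
    calc (g * (h : G))⁻¹ * (S g * h) = (h : G)⁻¹ * ((g⁻¹ * S g) * h) := by group
      _ = g⁻¹ * S g := by rw [← hc]; group
  rw [hval]
  refine ⟨H.pow_mem (hmH g) _, ?_⟩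
  by_cases h0 : orderOf (g⁻¹ * S g) = 0
  · right
    rw [orderOf_eq_zero_iff] at h0 ⊢
    rw [isOfFinOrder_pow]
    rintro (h | h)
    · exact h0 h
    · omega
  · left
    have hd : orderOf (g⁻¹ * S g) ∣ ∏ q, o q := by
      have h1 : o (g : G ⧸ H) ∣ ∏ q, o q := Finset.dvd_prod_of_mem o (Finset.mem_univ _)
      simp only [o, hout, h0, if_false] at h1
      exact h1
    rw [orderOf_dvd_iff_pow_eq_one.1 hd] at hval
    exact (inv_mul_eq_one.1 hval).symm

theorem aux_inj {G : Type*} [Group G] (H : Subgroup G)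
    (S : MulAut G) (hid : ∀ h ∈ H, S h = h) (g : G) (hg : g⁻¹ * S g ∈ H)
    (h0 : orderOf (g⁻¹ * S g) = 0) : Function.Injective fun n : ℕ => (S ^ n) g := by
  intro a b hab
  simp only [aux_pow_apply H S hid g hg] at hab
  exact (injective_pow_iff_not_isOfFinOrder.2 (orderOf_eq_zero_iff.1 h0)) (mul_left_cancel hab)

/-- for `T` in class (NC) restricting to the identity on a finite-index
normal subgroup `H` with finitely generated center, there is `m ≥ 1` such that the fixed
point subgroup `G'` of `T^m` has finite index, contains `H`, `T^m` acts trivially on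
`G/Z(H)`, every nontrivial cyclic subgroup meets `G'` nontrivially, and the `T`-orbit of
any point outside `G'` is infinite. -/
theorem classNC_fixed_point_subgroup {G : Type*} [Group G]
    (H : Subgroup G) [H.Normal] (hfi : H.FiniteIndex)
    (hfg : Group.FG ↥(H ⊓ Subgroup.centralizer (H : Set G)))
    (T : MulAut G) (hT : ClassNC T) (hid : ∀ h ∈ H, T h = h) :
    ∃ m : ℕ, 0 < m ∧
      ∃ G' : Subgroup G, (G' : Set G) = {g : G | (T ^ m) g = g} ∧ G'.FiniteIndex ∧
        H ≤ G' ∧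
        (∀ g : G, g⁻¹ * (T ^ m) g ∈ H ⊓ Subgroup.centralizer (H : Set G)) ∧
        (∀ x : G, x ≠ 1 → Subgroup.zpowers x ⊓ G' ≠ ⊥) ∧
        (∀ x : G, x ∉ G' → (Set.range fun n : ℕ => (T ^ n) x).Infinite) := by
  obtain ⟨m, hm, h⟩ := aux_m H hfi T hid
  have hS := aux_pow_fix H T hid m
  let G' : Subgroup G := (T ^ m).toMonoidHom.eqLocus (MonoidHom.id G)
  have hG' : ∀ g, g ∈ G' ↔ (T ^ m) g = g := fun g => Iff.rfl
  have hle : H ≤ G' := fun g hg => hS g hg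
  have hinj : ∀ x, x ∉ G' → Function.Injective fun n : ℕ => ((T ^ m) ^ n) x := by
    intro x hx
    exact aux_inj H _ hS x (h x).1 ((h x).2.resolve_left hx)
  refine ⟨m, hm, G', rfl, Subgroup.finiteIndex_of_le hle, hle,
    fun g => ⟨(h g).1, aux_cent H _ hS g⟩, ?_, ?_⟩
  · intro x hx hbot
    have hmem : ∀ y ∈ Subgroup.zpowers x, y ∈ G' → y = 1 := by
      intro y hy hy'
      have : y ∈ Subgroup.zpowers x ⊓ G' := ⟨hy, hy'⟩
      rwa [hbot, Subgroup.mem_bot] at this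
    have hxn : x ^ H.index = 1 :=
      hmem _ (Subgroup.npow_mem_zpowers x _) (hle (Subgroup.pow_index_mem H x))
    have hfin : (Subgroup.zpowers x : Set G).Finite := by
      rw [finite_zpowers]
      exact isOfFinOrder_iff_pow_eq_one.2 ⟨_, Nat.pos_of_ne_zero hfi.index_ne_zero, hxn⟩
    refine hT (Subgroup.zpowers x) ⟨x, rfl⟩ (by rwa [Ne, Subgroup.zpowers_eq_bot])
      (fun k => ((m * k : ℕ) : ℤ)) ?_
    rw [TopologicalSpace.tendsto_nhds_generateFrom_iff]
    rintro s (⟨K, hK, rfl⟩ | ⟨U, rfl⟩) hs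
    · have h1K : (1 : G) ∉ K := fun h1 => by
        have h2 : (1 : G) ∈ ((⊥ : Subgroup G) : Set G) ∩ K := ⟨Subgroup.one_mem _, h1⟩
        rw [Set.mem_ofPred_eq] at hs
        rw [hs] at h2
        exact h2
      have hev : ∀ y ∈ (Subgroup.zpowers x : Set G),
          ∀ᶠ k : ℕ in Filter.atTop, ((T ^ m) ^ k) y ∉ K := by
        intro y hy
        by_cases hy' : y ∈ G'
        · rw [hmem y hy hy']
          simp [h1K]
        · rw [← Nat.cofinite_eq_atTop]
          exact (hinj y hy').tendsto_cofinite.eventually hK.compl_mem_cofinite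
      have hev2 := (Filter.eventually_all_finite hfin).2 hev
      filter_upwards [hev2] with k hk
      simp only [Set.mem_preimage, Set.mem_ofPred_eq]
      rw [Set.eq_empty_iff_forall_notMem]
      rintro z ⟨hz, hzK⟩
      obtain ⟨y, hy, rfl⟩ := hz
      refine hk y hy ?_
      rw [← pow_mul]
      rw [zpow_natCast] at hzK
      exact hzK
    · have h1U : (1 : G) ∈ U := by
        obtain ⟨z, hz, hzU⟩ := hs
        have : z = 1 := hz
        rwa [this] at hzU
      exact Filter.Eventually.of_forall fun k => ⟨1, Subgroup.one_mem _, h1U⟩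
  · intro x hx
    refine (Set.infinite_range_of_injective (hinj x hx)).mono ?_
    rintro _ ⟨n, rfl⟩
    exact ⟨m * n, by simp only [pow_mul]⟩
end

section
/- Let G be a discrete group, T an automorphism of G, and H a normal subgroup of finite index in G such that T|_H = Id, the center Z(H) of H is finitely generated, and Sub^c_H is closed in Sub_H. Then Sub^c_G is closed in Sub_G, and T acts distally on Sub^c_G if and only if T^m = Id for some integer m ≥ 1. -/
section Helpers

variable {G : Type*} [Group G]

theorem chab_isOpen_mem (g : G) : IsOpen {C : Subgroup G | g ∈ C} := by
  apply TopologicalSpace.isOpen_generateFrom_of_mem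
  right
  refine ⟨{g}, ?_⟩
  ext C
  simp

theorem chab_isOpen_notMem (g : G) : IsOpen {C : Subgroup G | g ∉ C} := by
  apply TopologicalSpace.isOpen_generateFrom_of_mem
  left
  refine ⟨{g}, Set.finite_singleton g, ?_⟩
  ext C
  simp

theorem chab_isOpen_agree (A : Subgroup G) (F : Set G) (hF : F.Finite) :
    IsOpen {C : Subgroup G | ∀ f ∈ F, (f ∈ C ↔ f ∈ A)} := by
  have : {C : Subgroup G | ∀ f ∈ F, (f ∈ C ↔ f ∈ A)} =
      ⋂ f ∈ F, {C : Subgroup G | f ∈ C ↔ f ∈ A} := by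
    ext C; simp
  rw [this]
  apply hF.isOpen_biInter
  intro f _
  by_cases h : f ∈ A
  · simpa [h] using chab_isOpen_mem f
  · simpa [h] using chab_isOpen_notMem f

theorem chab_agree_subset (U : Set (Subgroup G)) (hU : IsOpen U) :
    ∀ A ∈ U, ∃ F : Set G, F.Finite ∧
      ∀ C : Subgroup G, (∀ f ∈ F, (f ∈ C ↔ f ∈ A)) → C ∈ U := by
  induction hU with
  | basic s hs =>
    intro A hA
    rcases hs with ⟨K, hK, rfl⟩ | ⟨V, rfl⟩
    · refine ⟨K, hK, fun C hC => ?_⟩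
      simp only [Set.mem_setOf_eq, Set.eq_empty_iff_forall_notMem, Set.mem_inter_iff,
        SetLike.mem_coe, not_and] at hA ⊢
      intro x hx hxK
      exact hA x ((hC x hxK).1 hx) hxK
    · obtain ⟨x, hxA, hxV⟩ := hA
      refine ⟨{x}, Set.finite_singleton x, fun C hC => ⟨x, ?_, hxV⟩⟩
      exact (hC x rfl).2 hxA
  | univ => intro A _; exact ⟨∅, Set.finite_empty, fun _ _ => trivial⟩
  | inter s t _ _ ihs iht =>
    intro A hA
    obtain ⟨F, hF, h1⟩ := ihs A hA.1
    obtain ⟨F', hF', h2⟩ := iht A hA.2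
    exact ⟨F ∪ F', hF.union hF', fun C hC =>
      ⟨h1 C fun f hf => hC f (Or.inl hf), h2 C fun f hf => hC f (Or.inr hf)⟩⟩
  | sUnion S _ ih =>
    rintro A ⟨s, hs, hA⟩
    obtain ⟨F, hF, h1⟩ := ih s hs A hA
    exact ⟨F, hF, fun C hC => ⟨s, hs, h1 C hC⟩⟩

theorem chab_mem_closure (S : Set (Subgroup G)) (A : Subgroup G) :
    A ∈ closure S ↔ ∀ F : Set G, F.Finite → ∃ C ∈ S, ∀ f ∈ F, (f ∈ C ↔ f ∈ A) := by
  rw [mem_closure_iff]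
  constructor
  · intro h F hF
    obtain ⟨C, hC, hCS⟩ := h _ (chab_isOpen_agree A F hF) (fun f _ => Iff.rfl)
    exact ⟨C, hCS, hC⟩
  · intro h U hU hA
    obtain ⟨F, hF, h1⟩ := chab_agree_subset U hU A hA
    obtain ⟨C, hCS, hC⟩ := h F hF
    exact ⟨C, h1 C hC, hCS⟩

theorem chab_t2 : T2Space (Subgroup G) := by
  refine ⟨fun A B hAB => ?_⟩
  have : ∃ g, ¬ (g ∈ A ↔ g ∈ B) := by
    by_contra! h
    exact hAB (Subgroup.ext h)
  obtain ⟨g, hg⟩ := this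
  by_cases hA : g ∈ A
  · have hB : g ∉ B := by tauto
    refine ⟨_, _, chab_isOpen_mem g, chab_isOpen_notMem g, hA, hB, ?_⟩
    rw [Set.disjoint_left]
    intro C h1 h2
    exact h2 h1
  · have hB : g ∈ B := by tauto
    refine ⟨_, _, chab_isOpen_notMem g, chab_isOpen_mem g, hA, hB, ?_⟩
    rw [Set.disjoint_left]
    intro C h1 h2
    exact h1 h2

theorem cyc_of_le {A : Subgroup G} {x : G} (h : A ≤ Subgroup.zpowers x) :
    A ∈ cyclicSubgroups G := by
  have h1 : IsCyclic (A.subgroupOf (Subgroup.zpowers x)) := inferInstance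
  have h2 : IsCyclic A :=
    isCyclic_of_surjective _ (Subgroup.subgroupOfEquivOfLe h).surjective
  obtain ⟨g, hg⟩ := (Subgroup.isCyclic_iff_exists_zpowers_eq_top A).1 h2
  exact ⟨g, hg.symm⟩

theorem cyc_closed (H : Subgroup G) [H.FiniteIndex]
    (hcl : IsClosed (cyclicSubgroups ↥H)) : IsClosed (cyclicSubgroups G) := by
  rw [← closure_subset_iff_isClosed] at hcl ⊢
  intro A hA
  rw [chab_mem_closure] at hA
  have h1 : A.subgroupOf H ∈ cyclicSubgroups ↥H := by
    apply hcl
    rw [chab_mem_closure]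
    intro F hF
    obtain ⟨C, ⟨x, hx⟩, hC⟩ := hA (Subtype.val '' F) (hF.image _)
    refine ⟨C.subgroupOf H, ?_, ?_⟩
    · have : IsCyclic C := by
        rw [hx]; infer_instance
      have h3 : IsCyclic (C.subgroupOf H) :=
        isCyclic_of_injective
          ((H.subtype.subgroupComap C : C.comap H.subtype →* C))
          (by
            intro a b hab
            have := congrArg Subtype.val hab
            apply Subtype.ext
            apply Subtype.ext
            exact this)
      obtain ⟨g, hg⟩ := (Subgroup.isCyclic_iff_exists_zpowers_eq_top _).1 h3
      exact ⟨g, hg.symm⟩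
    · intro f hf
      rw [Subgroup.mem_subgroupOf, Subgroup.mem_subgroupOf]
      exact hC _ ⟨f, hf, rfl⟩
  obtain ⟨y, hy⟩ := h1
  let F : Set G := insert (y : G) (Set.range fun q : A ⧸ H.subgroupOf A => (q.out : G))
  have hF : F.Finite := (Set.finite_range _).insert _
  obtain ⟨C, ⟨x, rfl⟩, hC⟩ := hA F hF
  have hyA : (y : G) ∈ A := by
    have : y ∈ A.subgroupOf H := by rw [hy]; exact Subgroup.mem_zpowers y
    exact this
  have hyC : (y : G) ∈ Subgroup.zpowers x := (hC _ (Set.mem_insert _ _)).2 hyA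
  apply cyc_of_le (x := x)
  intro a ha
  let q : A ⧸ H.subgroupOf A := QuotientGroup.mk ⟨a, ha⟩
  have hq : (q.out : G) ∈ Subgroup.zpowers x :=
    (hC _ (Set.mem_insert_of_mem _ ⟨q, rfl⟩)).2 q.out.2
  have h2 : (q.out)⁻¹ * ⟨a, ha⟩ ∈ H.subgroupOf A := by
    rw [← QuotientGroup.eq]
    exact QuotientGroup.out_eq' q
  have h3 : (q.out : G)⁻¹ * a ∈ H := h2
  have h4 : (⟨(q.out : G)⁻¹ * a, h3⟩ : H) ∈ A.subgroupOf H := by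
    rw [Subgroup.mem_subgroupOf]
    exact A.mul_mem (A.inv_mem q.out.2) ha
  rw [hy] at h4
  obtain ⟨k, hk⟩ := h4
  have h5 : (y : G) ^ k = (q.out : G)⁻¹ * a := by
    have := congrArg Subtype.val hk
    simpa using this
  have h6 : a = (q.out : G) * (y : G) ^ k := by rw [h5]; group
  rw [h6]
  exact Subgroup.mul_mem _ hq (Subgroup.zpow_mem _ hyC k)

theorem addtors_exp (M : Type*) [AddCommGroup M] [AddGroup.FG M] :
    ∃ e : ℕ, 0 < e ∧ ∀ (x : M) (n : ℤ), n ≠ 0 → n • x = 0 → e • x = 0 := by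
  have : Module.Finite ℤ M := Module.Finite.iff_addGroup_fg.mpr inferInstance
  let t := Submodule.torsion ℤ M
  have : Finite t := Module.finite_of_fg_torsion t (Submodule.torsion_isTorsion)
  refine ⟨Nat.card t, Nat.card_pos, fun x n hn hx => ?_⟩
  have hxt : x ∈ t := by
    rw [Submodule.mem_torsion_iff]
    exact ⟨⟨n, mem_nonZeroDivisors_of_ne_zero hn⟩, hx⟩
  have := card_nsmul_eq_zero' (x := (⟨x, hxt⟩ : t))
  simpa using congrArg Subtype.val this

theorem tors_exp (Z : Subgroup G) (hZ : ∀ a ∈ Z, ∀ b ∈ Z, a * b = b * a)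
    (hfg : Group.FG Z) :
    ∃ e : ℕ, 0 < e ∧ ∀ x ∈ Z, ∀ (n : ℤ), n ≠ 0 → x ^ n = 1 → x ^ e = 1 := by
  letI : CommGroup Z :=
    { (inferInstance : Group Z) with
      mul_comm := fun a b => Subtype.ext (hZ a a.2 b b.2) }
  have h : Group.FG Z := hfg
  haveI : AddGroup.FG (Additive Z) := GroupFG.iff_add_fg.1 h
  obtain ⟨e, he, h⟩ := addtors_exp (Additive Z)
  refine ⟨e, he, fun x hx n hn hxn => ?_⟩
  have := h (Additive.ofMul ⟨x, hx⟩) n hn (by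
    rw [← ofMul_zpow]
    have h1 : (⟨x, hx⟩ : Z) ^ n = 1 := Subtype.ext (by simpa using hxn)
    rw [h1]; rfl)
  rw [← ofMul_pow] at this
  have h2 : (⟨x, hx⟩ : Z) ^ e = 1 := this
  simpa using congrArg Subtype.val h2

theorem fix_zpow (S : MulAut G) (g : G) (h : S g = g) (n : ℤ) : (S ^ n) g = g := by
  have h1 : S ∈ MulAction.stabilizer (MulAut G) g := h
  exact Subgroup.zpow_mem _ h1 n

theorem finite_roots (x a : G) (k : ℕ) (hk : 0 < k) :
    {g : G | g ∈ Subgroup.zpowers x ∧ g ^ k = a}.Finite := by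
  by_cases hx : IsOfFinOrder x
  · have : Finite (Subgroup.zpowers x) := (finite_zpowers.2 hx).to_subtype
    exact (Set.toFinite (Subgroup.zpowers x : Set G)).subset fun g hg => hg.1
  · apply Set.Subsingleton.finite
    rintro g ⟨⟨i, rfl⟩, h1⟩ g' ⟨⟨j, rfl⟩, h2⟩
    have hinj := injective_zpow_iff_not_isOfFinOrder.2 hx
    have h3 : x ^ (i * k) = x ^ (j * k) := by
      rw [zpow_mul, zpow_mul, zpow_natCast, zpow_natCast]
      exact h1.trans h2.symm
    have h4 := hinj h3
    have h5 : i = j := by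
      have : (k : ℤ) ≠ 0 := by exact_mod_cast hk.ne'
      exact mul_right_cancel₀ this h4
    rw [h5]

/-- some power of `T` fixes all periodic points. -/
theorem exists_power (T : MulAut G) (H : Subgroup G) [H.Normal] [H.FiniteIndex]
    (hid : ∀ h ∈ H, T h = h)
    (hfg : Group.FG ↥(H ⊓ Subgroup.centralizer (H : Set G))) :
    ∃ m : ℕ, 0 < m ∧ ∀ (g : G) (n : ℤ), n ≠ 0 → ((T ^ m) ^ n) g = g → (T ^ m) g = g := by
  obtain ⟨e, he, hexp⟩ := tors_exp (H ⊓ Subgroup.centralizer (H : Set G))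
    (by
      intro a ha b hb
      exact (Subgroup.mem_centralizer_iff.1 hb.2 a ha.1)) hfg
  have hmap : H.map (T : G ≃* G).toMonoidHom = H := by
    ext h
    constructor
    · rintro ⟨h', hh', rfl⟩
      have : T h' = h' := hid h' hh'
      change T h' ∈ H
      rwa [this]
    · intro hh
      exact ⟨h, hh, hid h hh⟩
  let S : MulAut (G ⧸ H) := QuotientGroup.congr H H T hmap
  have hS : ∀ (n : ℕ) (g : G), (S ^ n) (QuotientGroup.mk g) = QuotientGroup.mk ((T ^ n) g) := by
    intro n
    induction n with
    | zero => intro g; rfl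
    | succ n ih =>
      intro g
      rw [pow_succ, pow_succ, MulAut.mul_apply, MulAut.mul_apply]
      have : S (QuotientGroup.mk g) = QuotientGroup.mk (T g) := rfl
      rw [this, ih]
  have hfin : Finite (MulAut (G ⧸ H)) :=
    Finite.of_injective (fun s : MulAut (G ⧸ H) => (s : (G ⧸ H) → (G ⧸ H)))
      DFunLike.coe_injective
  let m := Nat.card (MulAut (G ⧸ H))
  have hm : 0 < m := Nat.card_pos
  have hSm : S ^ m = 1 := pow_card_eq_one'
  have hRid : ∀ h ∈ H, (T ^ m) h = h := by
    intro h hh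
    have := fix_zpow T h (hid h hh) m
    simpa using this
  have hc : ∀ g, g⁻¹ * (T ^ m) g ∈ H ⊓ Subgroup.centralizer (H : Set G) := by
    intro g
    refine ⟨?_, ?_⟩
    · change g⁻¹ * (T ^ m) g ∈ H
      rw [← QuotientGroup.eq, ← hS m g, hSm]
      rfl
    · change g⁻¹ * (T ^ m) g ∈ Subgroup.centralizer (H : Set G)
      rw [Subgroup.mem_centralizer_iff]
      intro h hh
      have h1 : g * h * g⁻¹ ∈ H := Subgroup.Normal.conj_mem inferInstance h hh g
      have h2 := hRid _ h1
      rw [map_mul, map_mul, hRid h hh, map_inv] at h2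
      have h3 : (T ^ m) g * h = g * h * g⁻¹ * (T ^ m) g := by
        rw [← h2]; group
      rw [mul_assoc g⁻¹, h3]; group
  have hRc : ∀ (g : G) (n : ℕ), ((T ^ m) ^ n) g = g * (g⁻¹ * (T ^ m) g) ^ n := by
    intro g n
    induction n with
    | zero => simp
    | succ n ih =>
      rw [pow_succ', MulAut.mul_apply, ih, map_mul, map_pow, hRid _ (hc g).1, pow_succ',
        ← mul_assoc, mul_inv_cancel_left]
  refine ⟨m * e, Nat.mul_pos hm he, fun g n hn hg => ?_⟩
  have key : ∀ N : ℕ, N ≠ 0 → ((T ^ (m * e)) ^ N) g = g → (T ^ (m * e)) g = g := by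
    intro N hN h
    rw [← pow_mul, mul_assoc, pow_mul, hRc] at h
    have h1 : (g⁻¹ * (T ^ m) g) ^ (e * N) = 1 := by simpa using h
    have h2 := hexp _ (hc g) ((e * N : ℕ) : ℤ)
      (by exact_mod_cast Nat.mul_ne_zero he.ne' hN) (by rw [zpow_natCast]; exact h1)
    rw [pow_mul, hRc, h2, mul_one]
  apply key n.natAbs (by simpa using hn)
  rcases Int.natAbs_eq n with h | h
  · rw [← zpow_natCast, ← h]; exact hg
  · have h1 : ((n.natAbs : ℕ) : ℤ) = -n := by omega
    rw [← zpow_natCast, h1, zpow_neg]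
    have h2 : g = ((T ^ (m * e)) ^ n)⁻¹ (((T ^ (m * e)) ^ n) g) := by
      rw [MulAut.inv_apply_self]
    rw [hg] at h2
    exact h2.symm

theorem not_distal (T R : MulAut G) (m k : ℕ) (hR : R = T ^ m) (hk : 0 < k)
    (hpow : ∀ g : G, R (g ^ k) = g ^ k)
    (hper : ∀ (g : G) (n : ℤ), n ≠ 0 → (R ^ n) g = g → R g = g)
    (hd : ActsDistallyOn T (cyclicSubgroups G)) (x : G) : R x = x := by
  by_contra hx
  let B : Subgroup G :=
    Subgroup.zpowers x ⊓ (R.toMonoidHom.eqLocus (MonoidHom.id G))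
  have hB : ∀ g, g ∈ B ↔ g ∈ Subgroup.zpowers x ∧ R g = g := fun g => Iff.rfl
  have hBc : B ∈ cyclicSubgroups G := cyc_of_le (x := x) inf_le_left
  have hne : Subgroup.zpowers x ≠ B := by
    intro h
    have : x ∈ B := by rw [← h]; exact Subgroup.mem_zpowers x
    exact hx ((hB x).1 this).2
  apply hd _ ⟨x, rfl⟩ B hBc hne B hBc
  have hBinv : ∀ n : ℤ, autMap R n B = B := by
    intro n
    ext g
    constructor
    · rintro ⟨b, hb, rfl⟩
      have : (R ^ n) b = b := fix_zpow R b ((hB b).1 hb).2 n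
      change (R ^ n) b ∈ B
      rwa [this]
    · intro hg
      exact ⟨g, hg, fix_zpow R g ((hB g).1 hg).2 n⟩
  have hsub : ∀ n : ℤ, B ≤ autMap R n (Subgroup.zpowers x) := by
    intro n g hg
    exact ⟨g, ((hB g).1 hg).1, fix_zpow R g ((hB g).1 hg).2 n⟩
  have hfin : ∀ f : G, f ∉ B → {n : ℤ | f ∈ autMap R n (Subgroup.zpowers x)}.Finite := by
    intro f hf
    have hsubset : {n : ℤ | f ∈ autMap R n (Subgroup.zpowers x)} ⊆
        ⋃ g ∈ {g : G | g ∈ Subgroup.zpowers x ∧ g ^ k = f ^ k},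
          {n : ℤ | (R ^ n) g = f} := by
      rintro n ⟨g, hg, hgf⟩
      have hgf' : (R ^ n) g = f := hgf
      simp only [Set.mem_iUnion]
      refine ⟨g, ⟨hg, ?_⟩, hgf'⟩
      rw [← hgf', ← map_pow, fix_zpow R _ (hpow g)]
    refine Set.Finite.subset ((finite_roots x (f ^ k) k hk).biUnion ?_) hsubset
    rintro g ⟨hg, -⟩
    apply Set.Subsingleton.finite
    intro n hn n' hn'
    by_contra hnn
    have hn1 : (R ^ n) g = f := hn
    have hn2 : (R ^ n') g = f := hn'
    have h1 : (R ^ (n' - n)) f = f := by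
      have : (R ^ (n' - n)) ((R ^ n) g) = (R ^ n') g := by
        rw [← MulAut.mul_apply, ← zpow_add, sub_add_cancel]
      rw [hn1, hn2] at this
      exact this
    have h2 := hper f _ (sub_ne_zero.2 (Ne.symm hnn)) h1
    have h3 : g = f := by
      have h4 := fix_zpow R f h2 (-n)
      rw [← hn1, ← MulAut.mul_apply, ← zpow_add, neg_add_cancel, zpow_zero, hn1] at h4
      exact h4
    exact hf ((hB f).2 ⟨h3 ▸ hg, h2⟩)
  rw [mem_closure_iff]
  intro W hW hBW
  obtain ⟨U, V, hU, hV, hBU, hBV, hUV⟩ := isOpen_prod_iff.1 hW B B hBW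
  obtain ⟨F, hF, hFU⟩ := chab_agree_subset U hU B hBU
  have hbad : (⋃ f ∈ {f ∈ F | f ∉ B},
      {n : ℤ | f ∈ autMap R n (Subgroup.zpowers x)}).Finite :=
    (hF.subset (Set.sep_subset _ _)).biUnion fun f hf => hfin f hf.2
  obtain ⟨n, hn⟩ := hbad.exists_notMem
  simp only [Set.mem_iUnion, not_exists] at hn
  have hRn : ∀ A, autMap R n A = autMap T (m * n) A := by
    intro A
    unfold autMap
    rw [hR, zpow_mul, zpow_natCast]
  refine ⟨(autMap R n (Subgroup.zpowers x), autMap R n B), hUV ⟨?_, ?_⟩, ⟨m * n, ?_⟩⟩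
  · apply hFU
    intro f hf
    constructor
    · intro h
      by_contra hfB
      exact hn f ⟨hf, hfB⟩ h
    · intro h
      exact hsub n h
  · change autMap R n B ∈ V
    rw [hBinv]; exact hBV
  · simp only [hRn]

theorem distal_of_finite (T : MulAut G) (m : ℕ) (hm : 0 < m) (hT : T ^ m = 1)
    (Y : Set (Subgroup G)) : ActsDistallyOn T Y := by
  intro A _ B _ hAB C _ hC
  have := chab_t2 (G := G)
  have hfin : (orbitPairs T A B).Finite := by
    have hTf : IsOfFinOrder T := isOfFinOrder_iff_pow_eq_one.2 ⟨m, hm, hT⟩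
    have h1 : (Subgroup.zpowers T : Set (MulAut G)).Finite :=
      finite_zpowers.2 hTf
    refine (h1.image fun S : MulAut G =>
      (Subgroup.map S.toMonoidHom A, Subgroup.map S.toMonoidHom B)).subset ?_
    rintro _ ⟨n, rfl⟩
    exact ⟨T ^ n, ⟨n, rfl⟩, rfl⟩
  rw [hfin.isClosed.closure_eq] at hC
  obtain ⟨n, hn⟩ := hC
  have h1 : autMap T n A = autMap T n B := by
    rw [Prod.mk.injEq] at hn
    rw [hn.1, hn.2]
  exact hAB (Subgroup.map_injective (T ^ n).injective h1)

end Helpers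

/-- if `T` restricts to the identity on a finite-index normal subgroup `H`
with finitely generated center and `Sub^c_H` is closed, then `Sub^c_G` is closed and `T`
acts distally on `Sub^c_G` iff `T^m = Id` for some `m ≥ 1`. -/
theorem distal_on_cyclicSubgroups_iff_finite_order {G : Type*} [Group G] (T : MulAut G)
    (H : Subgroup G) [H.Normal] (hfi : H.FiniteIndex) (hid : ∀ h ∈ H, T h = h)
    (hfg : Group.FG ↥(H ⊓ Subgroup.centralizer (H : Set G)))
    (hcl : IsClosed (cyclicSubgroups ↥H)) :
    IsClosed (cyclicSubgroups G) ∧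
    (ActsDistallyOn T (cyclicSubgroups G) ↔ ∃ m : ℕ, 0 < m ∧ T ^ m = 1) := by
  haveI := hfi
  refine ⟨cyc_closed H hcl, ?_, ?_⟩
  · intro hd
    obtain ⟨m, hm, hper⟩ := exists_power T H hid hfg
    refine ⟨m, hm, ?_⟩
    ext x
    refine not_distal T (T ^ m) m H.index rfl
      (Nat.pos_of_ne_zero Subgroup.FiniteIndex.index_ne_zero) ?_ hper hd x
    intro g
    have h1 := fix_zpow T _ (hid _ (H.pow_index_mem g)) m
    rw [zpow_natCast] at h1
    exact h1
  · rintro ⟨m, hm, hT⟩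
    exact distal_of_finite T m hm hT _
end

section
/- Let G be a discrete polycyclic group with unique maximal nilpotent normal subgroup G_nil, and let T be an automorphism of G. Then T belongs to class (NC) if and only if there exist an integer n ≥ 1 and a subgroup G' of finite index in G containing G_nil such that T^n restricted to G' is the identity and, for every nontrivial element x of G, the cyclic subgroup generated by x intersects G' nontrivially. Moreover, if G is nilpotent, then T belongs to class (NC) if and only if T^n = Id for some integer n ≥ 1. -/
open scoped commutatorElement in
def PStep {G : Type*} [Group G] (A B : Subgroup G) : Prop :=
  B ≤ A ∧ (∀ a ∈ A, ∀ b ∈ B, a * b * a⁻¹ ∈ B) ∧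
  (∀ H ≤ A, ∃ h ∈ H, ∀ g ∈ H, ∃ n : ℤ, h ^ (-n) * g ∈ B) ∧
  (∀ g ∈ A, ∀ h ∈ A, ⁅g, h⁆ ∈ B)

open scoped commutatorElement in
theorem pstep_of {G : Type*} [Group G] (A B : Subgroup G) (hBA : B ≤ A)
    (hn : (B.subgroupOf A).Normal) (hc : IsCyclic (↥A ⧸ B.subgroupOf A)) : PStep A B := by
  refine ⟨hBA, ?_, ?_, ?_⟩
  · intro a ha b hb
    have := hn.conj_mem ⟨b, hBA hb⟩ (by simpa [Subgroup.mem_subgroupOf] using hb) ⟨a, ha⟩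
    simpa [Subgroup.mem_subgroupOf] using this
  · intro H hH
    let f := QuotientGroup.mk' (B.subgroupOf A)
    obtain ⟨⟨y, hy⟩, hgen⟩ := (Subgroup.isCyclic ((H.subgroupOf A).map f)).exists_generator
    obtain ⟨h, hhH, rfl⟩ := hy
    refine ⟨h, hhH, fun g hg => ?_⟩
    obtain ⟨n, hn'⟩ := hgen ⟨f ⟨g, hH hg⟩, ⟨g, hH hg⟩, hg, rfl⟩
    refine ⟨n, ?_⟩
    have h1 : f (h ^ n) = f ⟨g, hH hg⟩ := by
      have := congrArg Subtype.val hn'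
      simpa using this
    have h2 := (QuotientGroup.eq (s := B.subgroupOf A)).1 h1
    simpa [Subgroup.mem_subgroupOf] using h2
  · intro g hg h hh
    let _ := hc.commGroup
    have h1 : ((⁅(⟨g, hg⟩ : A), (⟨h, hh⟩ : A)⁆ : A) : ↥A ⧸ B.subgroupOf A) = 1 := by
      change QuotientGroup.mk' (B.subgroupOf A) _ = 1
      rw [map_commutatorElement, commutatorElement_eq_one_iff_mul_comm]
      exact mul_comm _ _
    rw [QuotientGroup.eq_one_iff] at h1
    simpa [Subgroup.mem_subgroupOf, commutatorElement_def] using h1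

theorem polycyclic_ind {G : Type*} [Group G] (hG : IsPolycyclic G) (P : Subgroup G → Prop)
    (h0 : P ⊥) (hs : ∀ A B, PStep A B → P B → P A) : P ⊤ := by
  obtain ⟨k, s, hs0, hsl, hstep⟩ := hG
  have : ∀ i, P (s i) := by
    intro i
    induction i using Fin.reverseInduction with
    | last => rw [hsl]; exact h0
    | cast i ih =>
      obtain ⟨hle, hn, hc⟩ := hstep i
      exact hs _ _ (pstep_of _ _ hle hn hc) ih
  rw [← hs0]; exact this 0

theorem poly_fg {G : Type*} [Group G] (hG : IsPolycyclic G) (H : Subgroup G) : H.FG := by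
  refine polycyclic_ind hG (fun A => ∀ H ≤ A, H.FG) ?_ ?_ H le_top
  · intro H hH
    rw [le_bot_iff.1 hH]; exact Subgroup.FG.bot
  · intro A B ⟨hBA, _, hcyc, _⟩ ih H hH
    obtain ⟨h, hh, hgen⟩ := hcyc H hH
    have e : H = Subgroup.zpowers h ⊔ (H ⊓ B) := by
      apply le_antisymm
      · intro g hg
        obtain ⟨n, hn⟩ := hgen g hg
        have : g = h ^ n * (h ^ (-n) * g) := by simp
        rw [this]
        exact Subgroup.mul_mem_sup (Subgroup.zpow_mem_zpowers h n)
          ⟨H.mul_mem (H.zpow_mem hh _) hg, hn⟩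
      · exact sup_le (by simpa using hh) inf_le_left
    rw [e]
    refine Subgroup.FG.sup ?_ (ih _ inf_le_right)
    rw [Subgroup.zpowers_eq_closure]
    exact ⟨{h}, by simp⟩

theorem poly_countable {G : Type*} [Group G] (hG : IsPolycyclic G) : Countable G := by
  have := polycyclic_ind hG (fun A => (A : Set G).Countable) (by simp) ?_
  · simpa [Set.countable_univ_iff] using this
  · intro A B ⟨hBA, _, hcyc, _⟩ ih
    obtain ⟨h, hh, hgen⟩ := hcyc A le_rfl
    have : (A : Set G) ⊆ (fun p : ℤ × G => h ^ p.1 * p.2) '' (Set.univ ×ˢ (B : Set G)) := by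
      intro g hg
      obtain ⟨n, hn⟩ := hgen g hg
      exact ⟨(n, h ^ (-n) * g), ⟨trivial, hn⟩, by simp⟩
    exact ((Set.countable_univ.prod ih).image _).mono this

open scoped commutatorElement in
theorem poly_solvable {G : Type*} [Group G] (hG : IsPolycyclic G) :
    ∃ j, derivedSeries G j = ⊥ := by
  have := polycyclic_ind hG (fun A => ∀ i, derivedSeries G i ≤ A → ∃ j, derivedSeries G j = ⊥)
    ?_ ?_
  · exact this 0 le_top
  · intro i hi; exact ⟨i, le_bot_iff.1 hi⟩
  · intro A B ⟨_, _, _, hcomm⟩ ih i hi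
    refine ih (i + 1) ?_
    rw [derivedSeries_succ, Subgroup.commutator_le]
    exact fun g hg h hh => hcomm g (hi hg) h (hi hh)

theorem poly_finiteIndex {G : Type*} [Group G] (hG : IsPolycyclic G) (H : Subgroup G)
    (hH : ∀ x : G, ∃ m : ℕ, 0 < m ∧ x ^ m ∈ H) : H.FiniteIndex := by
  have := polycyclic_ind hG (fun A => ∃ F : Set G, F.Finite ∧ ∀ g ∈ A, ∃ f ∈ F, f⁻¹ * g ∈ H)
    ?_ ?_
  · obtain ⟨F, hF, hcov⟩ := this
    have : Finite (G ⧸ H) := by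
      have := hF.to_subtype
      refine Finite.of_surjective (fun f : F => ((f : G) : G ⧸ H)) ?_
      intro q
      induction q using QuotientGroup.induction_on with
      | H g =>
        obtain ⟨f, hf, h⟩ := hcov g trivial
        exact ⟨⟨f, hf⟩, QuotientGroup.eq.2 h⟩
    exact Subgroup.finiteIndex_of_finite_quotient
  · refine ⟨{1}, by simp, fun g hg => ⟨1, by simp, ?_⟩⟩
    rw [Subgroup.mem_bot.1 hg]; simp
  · rintro A B ⟨hBA, hnorm, hcyc, _⟩ ⟨F, hF, hcov⟩
    obtain ⟨a, ha, hgen⟩ := hcyc A le_rfl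
    obtain ⟨m, hm, ham⟩ := hH a
    refine ⟨(fun p : ℤ × G => a ^ p.1 * p.2) '' ((Set.Ico (0:ℤ) m) ×ˢ F),
      ((Set.finite_Ico _ _).prod hF).image _, ?_⟩
    intro g hg
    obtain ⟨n, hn⟩ := hgen g hg
    have hb := hnorm (a ^ ((m:ℤ) * (n / m))) (A.zpow_mem ha _) _ hn
    obtain ⟨f, hf, hfH⟩ := hcov _ hb
    refine ⟨_, ⟨(n % m, f), ⟨⟨Int.emod_nonneg _ (by omega), Int.emod_lt_of_pos _ (by omega)⟩, hf⟩, rfl⟩, ?_⟩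
    have h2 : a ^ ((m:ℤ) * (n / m)) ∈ H := by
      rw [zpow_mul, zpow_natCast]; exact H.zpow_mem ham _
    have h3 := H.mul_mem hfH h2
    convert h3 using 1
    have h4 : n % m = (m:ℤ) * (n / m) + (-n) + (2 * (n % m)) := by
      have := Int.emod_add_mul_ediv n m; linarith
    have h5 : a ^ (-(n % (m:ℤ))) = a ^ ((m:ℤ) * (n / m)) * a ^ (-n) := by
      rw [← zpow_add]; congr 1; linarith
    simp only [mul_inv_rev, ← zpow_neg, h5]
    group

theorem periodic_of_finite {α : Type*} (f : α → α) (hf : Function.Injective f) (X : Set α)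
    (hX : X.Finite) (hm : ∀ y ∈ X, f y ∈ X) (x : α) (hx : x ∈ X) :
    x ∈ Function.periodicPts f := by
  have hmem : ∀ n : ℕ, f^[n] x ∈ X := by
    intro n
    induction n with
    | zero => exact hx
    | succ n ih => rw [Function.iterate_succ_apply']; exact hm _ ih
  have := hX.to_subtype
  obtain ⟨a, b, hab, he⟩ :=
    Finite.exists_ne_map_eq_of_infinite (fun n : ℕ => (⟨f^[n] x, hmem n⟩ : X))
  have he' : f^[a] x = f^[b] x := congrArg Subtype.val he
  rcases lt_or_gt_of_ne hab with h | h
  · refine Function.mk_mem_periodicPts (Nat.sub_pos_of_lt h) ?_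
    apply hf.iterate a
    rw [← Function.iterate_add_apply, Nat.add_sub_cancel' h.le, he']
  · refine Function.mk_mem_periodicPts (Nat.sub_pos_of_lt h) ?_
    apply hf.iterate b
    rw [← Function.iterate_add_apply, Nat.add_sub_cancel' h.le, he']

theorem nilpotent_periodic (N : Type*) [Group N] [Group.IsNilpotent N] :
    ∀ S : N ≃* N, (∀ H : Subgroup N, H.FG) → (∀ x, ∃ m : ℕ, 0 < m ∧ S (x ^ m) = x ^ m) →
      ∀ x, x ∈ Function.periodicPts S := by
  refine Group.nilpotent_center_quotient_ind (P := fun N _ _ =>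
    ∀ S : N ≃* N, (∀ H : Subgroup N, H.FG) → (∀ x, ∃ m : ℕ, 0 < m ∧ S (x ^ m) = x ^ m) →
      ∀ x, x ∈ Function.periodicPts S) N ?_ ?_
  · intro N _ _ S _ _ x
    exact Function.mk_mem_periodicPts one_pos (Subsingleton.elim _ _)
  · intro N _ _ ih S hfg hroot x
    have hmap : (Subgroup.center N).map S.toMonoidHom = Subgroup.center N :=
      Subgroup.characteristic_iff_map_eq.1 inferInstance S
    let S' : (N ⧸ Subgroup.center N) ≃* (N ⧸ Subgroup.center N) :=
      QuotientGroup.congr _ _ S hmap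
    have hsemi : Function.Semiconj (QuotientGroup.mk : N → N ⧸ Subgroup.center N) S S' :=
      fun y => rfl
    have h1 : (x : N ⧸ Subgroup.center N) ∈ Function.periodicPts S' := by
      refine ih S' ?_ ?_ _
      · intro H
        have h := hfg (H.comap (QuotientGroup.mk' (Subgroup.center N)))
        have h2 := (Group.fg_iff_subgroup_fg _).2 h
        have e := Subgroup.map_comap_eq_self_of_surjective
          (QuotientGroup.mk'_surjective (Subgroup.center N)) H
        rw [← e, Subgroup.fg_iff_submonoid_fg]
        exact ((Subgroup.fg_iff_submonoid_fg _).1 h).map (QuotientGroup.mk' (Subgroup.center N))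
      · intro q
        induction q using QuotientGroup.induction_on with
        | H y =>
          obtain ⟨m, hm, h⟩ := hroot y
          refine ⟨m, hm, ?_⟩
          rw [← QuotientGroup.mk_pow, ← hsemi.eq, h]
    obtain ⟨k, hk, hper⟩ := h1
    obtain ⟨m, hm, hxm⟩ := hroot x
    have hper' : ((S^[k] x : N) : N ⧸ Subgroup.center N) = x := by
      rw [(hsemi.iterate_right k).eq]; exact hper
    have hz : x⁻¹ * S^[k] x ∈ Subgroup.center N := QuotientGroup.eq.1 hper'.symm
    have hSk : ∀ y z : N, S^[k] (y * z) = S^[k] y * S^[k] z := fun y z =>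
      Function.Semiconj₂.iterate (fun a b => map_mul S a b) k y z
    let Sk : N ≃* N := { Equiv.ofBijective _ (S.bijective.iterate k) with map_mul' := hSk }
    have hSkx : ∀ y, Sk y = S^[k] y := fun y => rfl
    set Z : Subgroup N :=
      { carrier := {z | z ∈ Subgroup.center N ∧ z ^ m = 1}
        mul_mem' := by
          rintro a b ⟨ha, ha'⟩ ⟨hb, hb'⟩
          refine ⟨mul_mem ha hb, ?_⟩
          have : Commute a b := (Subgroup.mem_center_iff.1 hb a)
          rw [this.mul_pow, ha', hb', one_mul]
        one_mem' := ⟨one_mem _, one_pow _⟩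
        inv_mem' := by
          rintro a ⟨ha, ha'⟩
          exact ⟨inv_mem ha, by rw [inv_pow, ha', inv_one]⟩ } with hZ
    have hZmem : ∀ z, z ∈ Z ↔ z ∈ Subgroup.center N ∧ z ^ m = 1 := fun z => Iff.rfl
    have hZfin : Finite Z := by
      let _ : CommGroup Z := { (inferInstance : Group Z) with
        mul_comm := fun a b => Subtype.ext (Subgroup.mem_center_iff.1 b.2.1 a) }
      have : Group.FG Z := (Group.fg_iff_subgroup_fg _).2 (hfg Z)
      refine CommGroup.finite_of_fg_isMulTorsion _ ?_
      intro z
      exact isOfFinOrder_iff_pow_eq_one.2 ⟨m, hm, Subtype.ext z.2.2⟩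
    have hSkm : Sk (x ^ m) = x ^ m := (Function.IsFixedPt.iterate hxm k)
    have hz0 : x⁻¹ * Sk x ∈ Z := by
      refine (hZmem _).2 ⟨hz, ?_⟩
      have hc : Commute x (x⁻¹ * Sk x) := Subgroup.mem_center_iff.1 hz x
      have h2 : x * (x⁻¹ * Sk x) = Sk x := by simp
      have h3 := hc.mul_pow m
      rw [h2, ← map_pow, hSkm] at h3
      simpa using h3.symm
    have hper2 : x ∈ Function.periodicPts Sk := by
      refine periodic_of_finite Sk Sk.injective ((fun z => x * z) '' (Z : Set N))
        ((Set.toFinite _).image _) ?_ x ⟨1, Z.one_mem, by simp⟩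
      rintro _ ⟨z, hz', rfl⟩
      refine ⟨x⁻¹ * Sk x * Sk z, Z.mul_mem hz0 ?_, by simp [mul_assoc]⟩
      obtain ⟨hz1, hz2⟩ := (hZmem _).1 hz'
      refine (hZmem _).2 ⟨?_, by rw [← map_pow, hz2, map_one]⟩
      exact (Subgroup.characteristic_iff_le_comap.1
        (inferInstance : (Subgroup.center N).Characteristic) Sk) hz1
    obtain ⟨l, hl, hper3⟩ := hper2
    refine Function.mk_mem_periodicPts (Nat.mul_pos hk hl) ?_
    have : (S^[k])^[l] x = x := hper3
    rw [← Function.iterate_mul] at this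
    exact this

theorem exists_char {D : Type*} [Group D] [Group.FG D] (y : D)
    (hy : ∀ n : ℕ, 0 < n → y ^ n ∉ commutator D) :
    ∃ φ : D →* Multiplicative ℤ, (φ y).toAdd ≠ 0 := by
  let M := Additive (Abelianization D)
  have : Group.FG (Abelianization D) := QuotientGroup.fg _
  have : Module.Finite ℤ M := Module.Finite.iff_addGroup_fg.2 inferInstance
  let Q := M ⧸ Submodule.torsion ℤ M
  let v : M := Additive.ofMul (Abelianization.of y)
  have hv : (Submodule.Quotient.mk v : Q) ≠ 0 := by
    intro h0
    rw [Submodule.Quotient.mk_eq_zero, Submodule.mem_torsion_iff] at h0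
    obtain ⟨a, ha⟩ := h0
    have ha0 : (a : ℤ) ≠ 0 := nonZeroDivisors.coe_ne_zero a
    have h1 : (a:ℤ) • v = 0 := ha
    have h2 : (a:ℤ).natAbs • v = 0 := by
      have : ((a:ℤ).natAbs : ℤ) • v = 0 := by
        rcases Int.natAbs_eq (a:ℤ) with h | h
        · rw [← h]; exact h1
        · rw [h] at h1; simpa using h1
      simpa using this
    refine hy (a:ℤ).natAbs (Int.natAbs_pos.2 ha0) ?_
    have h3 : Abelianization.of (y ^ (a:ℤ).natAbs) = 1 := by
      rw [map_pow]; exact h2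
    exact (QuotientGroup.eq_one_iff _).1 h3
  have : ∃ f : Module.Dual ℤ Q, f (Submodule.Quotient.mk v : Q) ≠ 0 := by
    by_contra! h
    exact hv ((Module.forall_dual_apply_eq_zero_iff ℤ _).1 h)
  obtain ⟨f, hf⟩ := this
  let g : M →+ ℤ := (f.comp (Submodule.mkQ _)).toAddMonoidHom
  exact ⟨(AddMonoidHom.toMultiplicativeRight g).comp Abelianization.of, hf⟩

theorem natAbs_eq_of_map {G : Type*} [Group G] (hG : IsPolycyclic G) (S : G ≃* G) (x : G)
    (hx : ∀ n : ℕ, 0 < n → x ^ n ≠ 1) (a b : ℤ) (hb : b ≠ 0)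
    (hS : S (x ^ a) = x ^ b) : a.natAbs = b.natAbs := by
  classical
  obtain ⟨j, hj⟩ := poly_solvable hG
  have hex : ∃ j, ∀ n : ℕ, 0 < n → x ^ n ∉ derivedSeries G j :=
    ⟨j, by simpa [hj] using hx⟩
  have hspec := Nat.find_spec hex
  have hmin := fun i => Nat.find_min hex (m := i)
  rcases hi : Nat.find hex with _ | i
  · rw [hi] at hspec
    exact absurd (by simp) (hspec 1 one_pos)
  rw [hi] at hspec hmin
  have := hmin i (Nat.lt_succ_self i)
  push Not at this
  obtain ⟨r, hr, hxr⟩ := this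
  set D := derivedSeries G i with hD
  have : Group.FG D := (Group.fg_iff_subgroup_fg _).2 (poly_fg hG D)
  let y : D := ⟨x ^ r, hxr⟩
  have hy : ∀ n : ℕ, 0 < n → y ^ n ∉ commutator D := by
    intro n hn hmem
    refine hspec (r * n) (Nat.mul_pos hr hn) ?_
    have h1 : (y ^ n : D).1 ∈ (commutator D).map D.subtype := ⟨_, hmem, rfl⟩
    rw [derivedSeries_succ, ← hD]
    rw [commutator_def, Subgroup.map_commutator] at h1
    simpa [y, pow_mul, ← MonoidHom.range_eq_map] using h1
  have hne := exists_char y hy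
  have hP : ∃ c : ℕ, 0 < c ∧ ∃ φ : D →* Multiplicative ℤ, (φ y).toAdd.natAbs = c := by
    obtain ⟨φ, hφ⟩ := hne
    exact ⟨_, Int.natAbs_pos.2 hφ, φ, rfl⟩
  obtain ⟨hc, φ, hφ⟩ := Nat.find_spec hP
  have hle : ∀ ψ : D →* Multiplicative ℤ, (ψ y).toAdd ≠ 0 →
      (φ y).toAdd.natAbs ≤ (ψ y).toAdd.natAbs := by
    intro ψ hψ
    rw [hφ]
    exact Nat.find_min' hP ⟨Int.natAbs_pos.2 hψ, ψ, rfl⟩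
  have key : ∀ (R : G ≃* G) (a b : ℤ), b ≠ 0 → R (x ^ a) = x ^ b → a.natAbs ≤ b.natAbs := by
    intro R a b hb hR
    have hRD : ∀ d : D, R d ∈ D := fun d =>
      (Subgroup.characteristic_iff_le_comap.1 (inferInstance : D.Characteristic) R) d.2
    let R' : D →* D := (R.toMonoidHom.comp D.subtype).codRestrict D hRD
    have h1 : R' y ^ a = y ^ b := by
      rw [← map_zpow]
      apply Subtype.ext
      change R (((y ^ a : D) : G)) = ((y ^ b : D) : G)
      simp only [y, Subgroup.coe_zpow]
      rw [← zpow_natCast, ← zpow_mul, ← zpow_mul, mul_comm, zpow_mul, map_zpow, hR,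
        ← zpow_mul, mul_comm]
    have h2 := congrArg (fun d => (φ d).toAdd) h1
    simp only [map_zpow, toAdd_zpow, smul_eq_mul] at h2
    have h3 : a.natAbs * ((φ.comp R') y).toAdd.natAbs = b.natAbs * (φ y).toAdd.natAbs := by
      rw [← Int.natAbs_mul, ← Int.natAbs_mul]; exact congrArg _ h2
    have hpos : 0 < (φ y).toAdd.natAbs := by rw [hφ]; exact hc
    have hbpos := Int.natAbs_pos.2 hb
    have h4 : ((φ.comp R') y).toAdd ≠ 0 := by
      intro h0
      rw [h0] at h3
      have := Nat.mul_pos hbpos hpos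
      rw [← h3] at this; simp at this
    have h5 := hle _ h4
    by_contra! hlt
    have := Nat.mul_lt_mul_of_lt_of_le hlt h5 (hpos.trans_le h5)
    omega
  have ha : a ≠ 0 := by
    rintro rfl
    rw [zpow_zero, map_one] at hS
    refine hx b.natAbs (Int.natAbs_pos.2 hb) ?_
    rcases Int.natAbs_eq b with h | h <;> rw [h] at hS <;> simpa using hS.symm
  refine le_antisymm (key S a b hb hS) (key S.symm b a ha ?_)
  rw [← hS]; simp

theorem tendsto_bot_iff {G : Type*} [Group G] (u : ℕ → Subgroup G) :
    Filter.Tendsto u Filter.atTop (nhds ⊥) ↔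
      ∀ K : Set G, K.Finite → (1 : G) ∉ K →
        ∀ᶠ k in Filter.atTop, ((u k : Set G) ∩ K = ∅) := by
  rw [TopologicalSpace.tendsto_nhds_generateFrom_iff]
  constructor
  · intro h K hK h1
    refine h _ (Or.inl ⟨K, hK, rfl⟩) ?_
    change ((⊥ : Subgroup G) : Set G) ∩ K = ∅
    rw [Subgroup.coe_bot, Set.singleton_inter_eq_empty]
    exact h1
  · rintro h s (⟨K, hK, rfl⟩ | ⟨U, rfl⟩) hs
    · refine h K hK ?_
      change ((⊥ : Subgroup G) : Set G) ∩ K = ∅ at hs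
      rwa [Subgroup.coe_bot, Set.singleton_inter_eq_empty] at hs
    · have hs' : (((⊥ : Subgroup G) : Set G) ∩ U).Nonempty := hs
      rw [Subgroup.coe_bot, Set.singleton_inter_nonempty] at hs'
      exact Filter.Eventually.of_forall fun k => ⟨1, (u k).one_mem, hs'⟩

theorem mem_autMap_zpowers {G : Type*} [Group G] (T : MulAut G) (n : ℤ) (x g : G) :
    g ∈ autMap T n (Subgroup.zpowers x) ↔ ∃ m : ℤ, (T ^ n) (x ^ m) = g := by
  constructor
  · rintro ⟨_, ⟨m, rfl⟩, rfl⟩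
    exact ⟨m, rfl⟩
  · rintro ⟨m, rfl⟩
    exact ⟨_, ⟨m, rfl⟩, rfl⟩

theorem classNC_finite {G : Type*} [Group G] [Countable G] (T : MulAut G) (hT : ClassNC T)
    (x : G) (hx : x ≠ 1) :
    ∃ K : Set G, K.Finite ∧ (1 : G) ∉ K ∧ ∀ n : ℤ, ∃ m : ℤ, (T ^ n) (x ^ m) ∈ K := by
  by_contra! hcon
  obtain ⟨e, he⟩ := exists_surjective_nat G
  have hF : ∀ k : ℕ, ∃ n : ℤ, ∀ m : ℤ, (T ^ n) (x ^ m) ∉ (e '' Set.Iic k) \ {1} :=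
    fun k => hcon _ (((Set.finite_Iic k).image e).subset Set.sdiff_subset) (by simp)
  choose n hn using hF
  refine hT (Subgroup.zpowers x) ⟨x, rfl⟩ (by simpa using hx) n ?_
  rw [tendsto_bot_iff]
  intro K hK h1
  choose i hi using he
  obtain ⟨N, hN⟩ := (hK.image i).bddAbove
  filter_upwards [Filter.eventually_ge_atTop N] with k hk
  rw [Set.eq_empty_iff_forall_notMem]
  rintro g ⟨hg, hgK⟩
  obtain ⟨m, rfl⟩ := (mem_autMap_zpowers _ _ _ _).1 hg
  refine hn k m ⟨⟨i _, (hN ⟨_, hgK, rfl⟩).trans hk, hi _⟩, ?_⟩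
  rintro (h : _ = 1)
  rw [h] at hgK
  exact h1 hgK

/-- The subgroup of `T`-periodic elements. -/
def perSubgroup {G : Type*} [Group G] (T : MulAut G) : Subgroup G where
  carrier := {g | ∃ n : ℕ, 0 < n ∧ (T ^ n) g = g}
  one_mem' := ⟨1, one_pos, map_one _⟩
  inv_mem' := by
    rintro a ⟨n, hn, h⟩
    exact ⟨n, hn, by rw [map_inv, h]⟩
  mul_mem' := by
    rintro a b ⟨n, hn, ha⟩ ⟨m, hm, hb⟩
    refine ⟨n * m, Nat.mul_pos hn hm, ?_⟩
    rw [map_mul]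
    have h1 : (T ^ (n * m)) a = a := by
      rw [pow_mul]
      exact MulAction.mem_stabilizer_iff.1
        ((MulAction.stabilizer (MulAut G) a).pow_mem (MulAction.mem_stabilizer_iff.2 ha) m)
    have h2 : (T ^ (n * m)) b = b := by
      rw [mul_comm, pow_mul]
      exact MulAction.mem_stabilizer_iff.1
        ((MulAction.stabilizer (MulAut G) b).pow_mem (MulAction.mem_stabilizer_iff.2 hb) n)
    rw [h1, h2]

theorem mem_perSubgroup {G : Type*} [Group G] (T : MulAut G) (g : G) :
    g ∈ perSubgroup T ↔ ∃ n : ℕ, 0 < n ∧ (T ^ n) g = g := Iff.rfl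

theorem fix_of_dvd {G : Type*} [Group G] (T : MulAut G) {n k : ℕ} (h : n ∣ k) {a : G}
    (ha : (T ^ n) a = a) : (T ^ k) a = a := by
  obtain ⟨m, rfl⟩ := h
  rw [pow_mul]
  exact MulAction.mem_stabilizer_iff.1
    ((MulAction.stabilizer (MulAut G) a).pow_mem (MulAction.mem_stabilizer_iff.2 ha) m)

theorem perSubgroup_uniform {G : Type*} [Group G] (hG : IsPolycyclic G) (T : MulAut G) :
    ∃ n : ℕ, 0 < n ∧ ∀ g ∈ perSubgroup T, (T ^ n) g = g := by
  obtain ⟨s, hs⟩ := poly_fg hG (perSubgroup T)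
  have : ∀ g : s, ∃ n : ℕ, 0 < n ∧ (T ^ n) (g : G) = g := fun g =>
    (mem_perSubgroup T g).1 (hs ▸ Subgroup.subset_closure g.2)
  choose p hp0 hp using this
  refine ⟨∏ g, p g, Finset.prod_pos fun g _ => hp0 g, ?_⟩
  intro g hg
  rw [← hs] at hg
  induction hg using Subgroup.closure_induction with
  | mem x hx => exact fix_of_dvd T (Finset.dvd_prod_of_mem p (Finset.mem_univ ⟨x, hx⟩)) (hp ⟨x, hx⟩)
  | one => exact map_one _
  | mul a b _ _ ha hb => rw [map_mul, ha, hb]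
  | inv a _ ha => rw [map_inv, ha]

theorem classNC_periodic {G : Type*} [Group G] (hG : IsPolycyclic G) (T : MulAut G)
    (hT : ClassNC T) (x : G) (hx : x ≠ 1) : ∃ m : ℤ, x ^ m ≠ 1 ∧ x ^ m ∈ perSubgroup T := by
  have := poly_countable hG
  obtain ⟨K, hK, h1, hm⟩ := classNC_finite T hT x hx
  choose m hm using fun n : ℕ => hm n
  simp only [zpow_natCast] at hm
  have hne : ∀ n, x ^ (m n) ≠ 1 := by
    intro n h
    have := hm n
    rw [h, map_one] at this
    exact h1 this
  have hKf := hK.to_subtype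
  by_cases hord : IsOfFinOrder x
  · have : Finite (Subgroup.zpowers x) := finite_zpowers.2 hord
    have key : ∀ a b : ℕ, a < b → (T ^ a) (x ^ m a) = (T ^ b) (x ^ m b) → x ^ m a = x ^ m b →
        x ^ m a ∈ perSubgroup T := by
      intro a b hab h2 h3
      refine ⟨b - a, Nat.sub_pos_of_lt hab, ?_⟩
      apply (T ^ a).injective
      rw [← MulAut.mul_apply, ← pow_add, Nat.add_sub_cancel' hab.le, h2, h3]
    obtain ⟨a, b, hab, he⟩ := Finite.exists_ne_map_eq_of_infinite
      (fun n : ℕ => ((⟨x ^ m n, ⟨m n, rfl⟩⟩, ⟨_, hm n⟩) : Subgroup.zpowers x × K))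
    have he := (⟨congrArg (fun p => (p.1 : G)) he, congrArg (fun p => (p.2 : G)) he⟩ : x ^ m a = x ^ m b ∧ (T ^ a) (x ^ m a) = (T ^ b) (x ^ m b))
    rcases lt_or_gt_of_ne hab with h | h
    · exact ⟨m a, hne a, key a b h he.2 he.1⟩
    · exact ⟨m b, hne b, key b a h he.2.symm he.1.symm⟩
  · have hinf : ∀ n : ℕ, 0 < n → x ^ n ≠ 1 := by
      intro n hn h
      exact hord (isOfFinOrder_iff_pow_eq_one.2 ⟨n, hn, h⟩)
    have key : ∀ a b : ℕ, a < b → (T ^ a) (x ^ m a) = (T ^ b) (x ^ m b) →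
        x ^ m b ∈ perSubgroup T := by
      intro a b hab h2
      have h3 : (T ^ (b - a)) (x ^ m b) = x ^ m a := by
        apply (T ^ a).injective
        rw [← MulAut.mul_apply, ← pow_add, Nat.add_sub_cancel' hab.le, h2]
      have hpos := Nat.sub_pos_of_lt hab
      have h0 : m a ≠ 0 := fun h => hne a (by rw [h, zpow_zero])
      have h4 := natAbs_eq_of_map hG (T ^ (b - a)) x hinf _ _ h0 h3
      rcases Int.natAbs_eq_natAbs_iff.1 h4 with h5 | h5
      · exact ⟨b - a, hpos, by rw [h3, h5]⟩
      · refine ⟨(b - a) * 2, by omega, ?_⟩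
        have h6 : x ^ m a = (x ^ m b)⁻¹ := by rw [h5, zpow_neg, inv_inv]
        rw [h6] at h3
        rw [pow_mul, pow_two, MulAut.mul_apply, h3, map_inv, h3, inv_inv]
    obtain ⟨a, b, hab, he⟩ := Finite.exists_ne_map_eq_of_infinite
      (fun n : ℕ => (⟨_, hm n⟩ : K))
    simp only [Subtype.mk.injEq] at he
    rcases lt_or_gt_of_ne hab with h | h
    · exact ⟨m b, hne b, key a b h he⟩
    · exact ⟨m a, hne a, key b a h he.symm⟩

theorem exists_pow_mem_per {G : Type*} [Group G] (hG : IsPolycyclic G) (T : MulAut G)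
    (hT : ClassNC T) (x : G) : ∃ m : ℕ, 0 < m ∧ x ^ m ∈ perSubgroup T := by
  by_cases hx : x = 1
  · exact ⟨1, one_pos, by rw [hx, one_pow]; exact one_mem _⟩
  obtain ⟨m, hm1, hm⟩ := classNC_periodic hG T hT x hx
  refine ⟨m.natAbs, Int.natAbs_pos.2 (fun h => hm1 (by rw [h, zpow_zero])), ?_⟩
  rcases Int.natAbs_eq m with h | h
  · rw [h, zpow_natCast] at hm; exact hm
  · rw [h, zpow_neg, zpow_natCast] at hm; exact inv_mem_iff.1 hm

theorem nil_le_per {G : Type*} [Group G] (hG : IsPolycyclic G)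
    (Gnil : Subgroup G) (h1 : Gnil.Normal) (h2 : Group.IsNilpotent ↥Gnil)
    (h3 : ∀ N : Subgroup G, N.Normal → Group.IsNilpotent ↥N → N ≤ Gnil)
    (T : MulAut G) (hT : ClassNC T) : Gnil ≤ perSubgroup T := by
  obtain ⟨n, hn, hfix⟩ := perSubgroup_uniform hG T
  have hle : ∀ R : G ≃* G, Gnil.map R.toMonoidHom ≤ Gnil := by
    intro R
    refine h3 _ (h1.map _ R.surjective) ?_
    exact Group.nilpotent_of_mulEquiv (R.subgroupMap Gnil)
  have heq : Gnil.map (T ^ n : G ≃* G).toMonoidHom = Gnil := by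
    refine le_antisymm (hle _) ?_
    intro g hg
    exact ⟨(T ^ n : G ≃* G).symm g, hle (T ^ n : G ≃* G).symm ⟨g, hg, rfl⟩, by simp⟩
  let S : Gnil ≃* Gnil :=
    ((T ^ n : G ≃* G).subgroupMap Gnil).trans (MulEquiv.subgroupCongr heq)
  have hS : ∀ g : Gnil, (S g : G) = (T ^ n) g := fun g => rfl
  intro g hg
  have hpp := nilpotent_periodic Gnil S ?_ ?_ ⟨g, hg⟩
  · obtain ⟨k, hk, hper⟩ := hpp
    have hsemi : Function.Semiconj (Subtype.val : Gnil → G) S ⇑(T ^ n) := hS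
    have h4 := (hper.map hsemi)
    refine ⟨n * k, Nat.mul_pos hn hk, ?_⟩
    have h5 : (⇑(T ^ n))^[k] g = g := h4
    have h6 : ∀ (R : MulAut G) (k : ℕ) (y : G), (R ^ k) y = R^[k] y := by
      intro R k
      induction k with
      | zero => intro y; rfl
      | succ k ih => intro y; rw [pow_succ, MulAut.mul_apply, ih, Function.iterate_succ_apply]
    rw [pow_mul, h6, h5]
  · intro H
    have h := (Subgroup.fg_iff_submonoid_fg _).1 (poly_fg hG (H.map Gnil.subtype))
    rw [Subgroup.fg_iff_submonoid_fg]
    exact Submonoid.FG.map_injective Gnil.subtype Gnil.subtype_injective h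
  · intro y
    obtain ⟨m, hm, hy⟩ := exists_pow_mem_per hG T hT y
    refine ⟨m, hm, Subtype.ext ?_⟩
    rw [hS]
    simpa using hfix _ hy

theorem classNC_of {G : Type*} [Group G] (T : MulAut G) (n : ℕ) (G' : Subgroup G) (hn : 0 < n)
    (hfix : ∀ g ∈ G', (T ^ n) g = g)
    (hmeet : ∀ x : G, x ≠ 1 → Subgroup.zpowers x ⊓ G' ≠ ⊥) : ClassNC T := by
  rintro A ⟨x, rfl⟩ hA u hu
  have hx : x ≠ 1 := by simpa using hA
  obtain ⟨⟨y, hy'⟩, hy0⟩ := Subgroup.ne_bot_iff_exists_ne_one.1 (hmeet x hx)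
  have hy1 : y ≠ 1 := fun h => hy0 (Subtype.ext h)
  obtain ⟨⟨m, rfl⟩, hy⟩ := hy'
  simp only at hy hy1
  rw [tendsto_bot_iff] at hu
  have := hu ((fun i : ℤ => (T ^ i) (x ^ m)) '' Set.Ico 0 n) ((Set.finite_Ico _ _).image _) ?_
  · obtain ⟨k, hk⟩ := this.exists
    rw [Set.eq_empty_iff_forall_notMem] at hk
    refine hk ((T ^ (u k)) (x ^ m)) ⟨(mem_autMap_zpowers _ _ _ _).2 ⟨m, rfl⟩,
      u k % n, ⟨Int.emod_nonneg _ (by omega), Int.emod_lt_of_pos _ (by omega)⟩, ?_⟩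
    change (T ^ (u k % n)) (x ^ m) = _
    conv_rhs => rw [← Int.emod_add_mul_ediv (u k) n, zpow_add, MulAut.mul_apply, zpow_mul, zpow_natCast]
    congr 1
    exact (MulAction.mem_stabilizer_iff.1 ((MulAction.stabilizer (MulAut G) (x ^ m)).zpow_mem
      (MulAction.mem_stabilizer_iff.2 (hfix _ hy)) (u k / n))).symm
  · rintro ⟨i, _, hi⟩
    exact hy1 ((map_eq_one_iff _ (T ^ i).injective).1 hi)

/-- for a discrete polycyclic group `G` with maximal nilpotent normal
subgroup `G_nil`, `T ∈ (NC)` iff some `T^n` is the identity on a finite-index subgroup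
`G'` containing `G_nil` that meets every nontrivial cyclic subgroup nontrivially;
if `G` is nilpotent, `T ∈ (NC)` iff `T` has finite order. -/
theorem polycyclic_classNC_iff {G : Type*} [Group G] (hG : IsPolycyclic G)
    (Gnil : Subgroup G) (h1 : Gnil.Normal) (h2 : Group.IsNilpotent ↥Gnil)
    (h3 : ∀ N : Subgroup G, N.Normal → Group.IsNilpotent ↥N → N ≤ Gnil)
    (T : MulAut G) :
    (ClassNC T ↔ ∃ (n : ℕ) (G' : Subgroup G), 0 < n ∧ G'.FiniteIndex ∧ Gnil ≤ G' ∧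
      (∀ g ∈ G', (T ^ n) g = g) ∧
      ∀ x : G, x ≠ 1 → Subgroup.zpowers x ⊓ G' ≠ ⊥) ∧
    (Group.IsNilpotent G → (ClassNC T ↔ ∃ n : ℕ, 0 < n ∧ T ^ n = 1)) := by
  have main : ClassNC T ↔ ∃ (n : ℕ) (G' : Subgroup G), 0 < n ∧ G'.FiniteIndex ∧ Gnil ≤ G' ∧
      (∀ g ∈ G', (T ^ n) g = g) ∧
      ∀ x : G, x ≠ 1 → Subgroup.zpowers x ⊓ G' ≠ ⊥ := by
    constructor
    · intro hT
      obtain ⟨n, hn, hfix⟩ := perSubgroup_uniform hG T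
      refine ⟨n, perSubgroup T, hn, poly_finiteIndex hG _ (exists_pow_mem_per hG T hT),
        nil_le_per hG Gnil h1 h2 h3 T hT, hfix, ?_⟩
      intro x hx hbot
      obtain ⟨m, hm1, hm⟩ := classNC_periodic hG T hT x hx
      have : x ^ m ∈ Subgroup.zpowers x ⊓ perSubgroup T := ⟨⟨m, rfl⟩, hm⟩
      rw [hbot] at this
      exact hm1 (Subgroup.mem_bot.1 this)
    · rintro ⟨n, G', hn, _, _, hfix, hmeet⟩
      exact classNC_of T n G' hn hfix hmeet
  refine ⟨main, fun hnil => ⟨fun hT => ?_, ?_⟩⟩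
  · obtain ⟨n, G', hn, _, hle, hfix, _⟩ := main.1 hT
    have htop : (⊤ : Subgroup G) ≤ Gnil :=
      h3 ⊤ inferInstance (Group.nilpotent_of_mulEquiv Subgroup.topEquiv.symm)
    refine ⟨n, hn, ?_⟩
    ext g
    exact hfix g (hle (htop (Subgroup.mem_top g)))
  · rintro ⟨n, hn, hTn⟩
    refine classNC_of T n ⊤ hn (fun g _ => by rw [hTn]; rfl) ?_
    intro x hx
    simpa using hx
end

section
/- Let G be a countable discrete group with the property that for every g ∈ G the set R_g of roots of g in G is finite. Then the complement in Sub^c_G of any neighbourhood of the trivial subgroup {e} in Sub^c_G is finite. Moreover, if G is infinite, then no automorphism of G acts expansively on Sub^c_G. -/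
open Filter Topology in
theorem exists_finite_avoid {G : Type*} [Group G] (V : Set (Subgroup G))
    (hV : V ∈ nhds (⊥ : Subgroup G)) :
    ∃ K : Set G, K.Finite ∧ (1 : G) ∉ K ∧ ∀ H : Subgroup G, (H : Set G) ∩ K = ∅ → H ∈ V := by
  obtain ⟨U, hUV, hU, hb⟩ := mem_nhds_iff.1 hV
  suffices h : ∃ K : Set G, K.Finite ∧ (1 : G) ∉ K ∧
      ∀ H : Subgroup G, (H : Set G) ∩ K = ∅ → H ∈ U by
    obtain ⟨K, h1, h2, h3⟩ := h
    exact ⟨K, h1, h2, fun H hH => hUV (h3 H hH)⟩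
  clear hUV hV
  have hU' : TopologicalSpace.GenerateOpen
    ({S | ∃ K : Set G, K.Finite ∧ S = {H : Subgroup G | (H : Set G) ∩ K = ∅}} ∪
     {S | ∃ U : Set G, S = {H : Subgroup G | ((H : Set G) ∩ U).Nonempty}}) U := hU
  clear hU
  induction hU' with
  | basic s hs =>
    rcases hs with ⟨K, hK, rfl⟩ | ⟨O, rfl⟩
    · refine ⟨K, hK, fun h1 => ?_, fun H hH => hH⟩
      have : (1 : G) ∈ ((⊥ : Subgroup G) : Set G) ∩ K := ⟨one_mem _, h1⟩
      have hb' : ((⊥ : Subgroup G) : Set G) ∩ K = ∅ := hb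
      rw [hb'] at this
      exact this
    · refine ⟨∅, Set.finite_empty, fun h => h, fun H _ => ?_⟩
      obtain ⟨y, hy, hyO⟩ := hb
      have : y = 1 := by simpa using hy
      exact ⟨y, by rw [this]; exact one_mem H, hyO⟩
  | univ => exact ⟨∅, Set.finite_empty, fun h => h, fun H _ => trivial⟩
  | inter s t _ _ ihs iht =>
    obtain ⟨K, h1, h2, h3⟩ := ihs hb.1
    obtain ⟨L, k1, k2, k3⟩ := iht hb.2
    refine ⟨K ∪ L, h1.union k1, fun h => h.elim h2 k2, fun H hH => ?_⟩
    rw [Set.inter_union_distrib_left, Set.union_empty_iff] at hH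
    exact ⟨h3 H hH.1, k3 H hH.2⟩
  | sUnion S _ ih =>
    obtain ⟨s, hs, hbs⟩ := hb
    obtain ⟨K, h1, h2, h3⟩ := ih s hs hbs
    exact ⟨K, h1, h2, fun H hH => ⟨s, hs, h3 H hH⟩⟩

theorem finite_generators_outside {G : Type*} [Group G]
    (hroots : ∀ g : G, {y : G | ∃ n : ℕ, 0 < n ∧ y ^ n = g}.Finite) (V : Set (Subgroup G))
    (hV : V ∈ nhds (⊥ : Subgroup G)) : {y : G | Subgroup.zpowers y ∉ V}.Finite := by
  obtain ⟨K, hK, h1, hKV⟩ := exists_finite_avoid V hV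
  have hfin : (⋃ g ∈ K, ({y : G | ∃ n : ℕ, 0 < n ∧ y ^ n = g} ∪
      {y : G | ∃ n : ℕ, 0 < n ∧ y ^ n = g⁻¹})).Finite :=
    hK.biUnion fun g _ => (hroots g).union (hroots g⁻¹)
  refine hfin.subset fun y hy => ?_
  have hne : ((Subgroup.zpowers y : Set G) ∩ K).Nonempty := by
    rw [Set.nonempty_iff_ne_empty]
    exact fun h => hy (hKV _ h)
  obtain ⟨g, hg, hgK⟩ := hne
  obtain ⟨n, rfl⟩ := Subgroup.mem_zpowers_iff.1 hg
  refine Set.mem_biUnion hgK ?_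
  have hn : n ≠ 0 := by
    rintro rfl
    exact h1 (by simpa using hgK)
  obtain ⟨m, rfl | rfl⟩ := n.eq_nat_or_neg
  · left
    exact ⟨m, by omega, by simp⟩
  · right
    exact ⟨m, by omega, by simp⟩

/-- for a countable discrete group `G` in which every element has finitely
many roots, the complement in `Sub^c_G` of any neighbourhood of the trivial subgroup is
finite; moreover if `G` is infinite, no automorphism of `G` acts expansively on
`Sub^c_G`. -/
theorem finite_roots_nbhd_cofinite_and_no_expansive {G : Type*} [Group G] [Countable G]
    (hroots : ∀ g : G, {y : G | ∃ n : ℕ, 0 < n ∧ y ^ n = g}.Finite) :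
    (∀ V : Set (Subgroup G), V ∈ nhds (⊥ : Subgroup G) → (cyclicSubgroups G \ V).Finite) ∧
    (Infinite G → ∀ T : MulAut G, ¬ ActsExpansivelyOn T (cyclicSubgroups G)) := by
  refine ⟨fun V hV => ?_, fun hinf T hT => ?_⟩
  · refine ((finite_generators_outside hroots V hV).image Subgroup.zpowers).subset ?_
    rintro H ⟨⟨x, rfl⟩, hx⟩
    exact ⟨x, hx, rfl⟩
  · obtain ⟨W, hW, hdiag, hexp⟩ := hT
    have hbot : (⊥ : Subgroup G) ∈ cyclicSubgroups G := ⟨1, by simp⟩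
    obtain ⟨x, hx⟩ : ∃ x : G, ∀ n : ℕ, 0 < n → x ^ n ≠ 1 := by
      obtain ⟨x, hx⟩ := (hroots 1).exists_notMem
      exact ⟨x, fun n hn h => hx ⟨n, hn, h⟩⟩
    have hinj : Function.Injective fun n : ℕ => x ^ n := by
      rw [injective_pow_iff_not_isOfFinOrder, isOfFinOrder_iff_pow_eq_one]
      rintro ⟨n, hn, h⟩
      exact hx n hn h
    have hVopen : {A : Subgroup G | (A, (⊥ : Subgroup G)) ∈ W} ∈ nhds (⊥ : Subgroup G) :=
      (hW.preimage (Continuous.prodMk_left (⊥ : Subgroup G))).mem_nhds (hdiag _ hbot)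
    have hS := finite_generators_outside hroots _ hVopen
    have key : ∀ k : ℕ, ∃ n : ℤ, (T ^ n) (x ^ (k + 1)) ∈
        {y : G | Subgroup.zpowers y ∉ {A : Subgroup G | (A, (⊥ : Subgroup G)) ∈ W}} := by
      intro k
      obtain ⟨n, hn⟩ := hexp (Subgroup.zpowers (x ^ (k + 1))) ⟨_, rfl⟩ ⊥ hbot
        (by rw [Ne, Subgroup.zpowers_eq_bot]; exact hx _ k.succ_pos)
      refine ⟨n, fun h => hn ?_⟩
      have e1 : autMap T n (⊥ : Subgroup G) = ⊥ := Subgroup.map_bot _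
      have e2 : autMap T n (Subgroup.zpowers (x ^ (k + 1))) =
          Subgroup.zpowers ((T ^ n) (x ^ (k + 1))) := MonoidHom.map_zpowers _ _
      rw [e1, e2]
      exact h
    choose n hn using key
    set S := {y : G | Subgroup.zpowers y ∉ {A : Subgroup G | (A, (⊥ : Subgroup G)) ∈ W}}
    have hR : (⋃ c ∈ S, {y : G | ∃ n : ℕ, 0 < n ∧ y ^ n = c}).Finite :=
      hS.biUnion fun c _ => hroots c
    have hmaps : ∀ k : ℕ, ((T ^ n k) x, (T ^ n k) (x ^ (k + 1))) ∈
        (⋃ c ∈ S, {y : G | ∃ n : ℕ, 0 < n ∧ y ^ n = c}) ×ˢ S := fun k =>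
      ⟨Set.mem_biUnion (hn k) ⟨k + 1, k.succ_pos, (map_pow _ _ _).symm⟩, hn k⟩
    refine Set.infinite_of_injective_forall_mem ?_ hmaps (hR.prod hS)
    intro k l hkl
    simp only [Prod.mk.injEq] at hkl
    obtain ⟨h1, h2⟩ := hkl
    rw [map_pow (T ^ n l), ← h1, ← map_pow] at h2
    have := hinj ((T ^ n k).injective h2)
    omega
end

section
/- Let G be an infinite discrete polycyclic group and let T be an automorphism of G. Then the action of T on Sub^c_G is not expansive. -/
/-- Basic neighbourhoods of the trivial subgroup. -/
theorem nhds_bot_aux {G : Type*} [Group G] (S : Set (Subgroup G)) (hS : IsOpen S)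
    (hb : (⊥ : Subgroup G) ∈ S) :
    ∃ K : Set G, K.Finite ∧ (1 : G) ∉ K ∧ ∀ H : Subgroup G, (H : Set G) ∩ K = ∅ → H ∈ S := by
  induction hS with
  | basic s hs =>
    rcases hs with ⟨K, hK, rfl⟩ | ⟨U, rfl⟩
    · refine ⟨K, hK, ?_, fun H hH => hH⟩
      intro h1
      have : (1 : G) ∈ (((⊥ : Subgroup G) : Set G) ∩ K) := ⟨by simp, h1⟩
      rw [Set.mem_ofPred_eq] at hb
      rw [hb] at this
      exact this
    · refine ⟨∅, Set.finite_empty, by simp, fun H _ => ?_⟩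
      obtain ⟨x, hx, hxU⟩ := hb
      have hx1 : x = 1 := by simpa using hx
      exact ⟨x, by rw [hx1]; exact H.one_mem, hxU⟩
  | univ => exact ⟨∅, Set.finite_empty, by simp, fun H _ => trivial⟩
  | inter s t _ _ ihs iht =>
    obtain ⟨K, hK, h1, h⟩ := ihs hb.1
    obtain ⟨L, hL, h1', h'⟩ := iht hb.2
    refine ⟨K ∪ L, hK.union hL, by simp [h1, h1'], fun H hH => ?_⟩
    rw [Set.inter_union_distrib_left, Set.union_empty_iff] at hH
    exact ⟨h H hH.1, h' H hH.2⟩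
  | sUnion 𝒮 _ ih =>
    obtain ⟨s, hs, hbs⟩ := hb
    obtain ⟨K, hK, h1, h⟩ := ih s hs hbs
    exact ⟨K, hK, h1, fun H hH => ⟨s, hs, h H hH⟩⟩

/-- Elements of infinite order have finitely many exponents of roots, and torsion
implies finite. -/
def RootProp {G : Type*} [Group G] (H : Subgroup G) : Prop :=
  (∀ f ∈ H, ¬ IsOfFinOrder f → {m : ℕ | ∃ y ∈ H, y ^ m = f}.Finite) ∧
  ((∀ x ∈ H, IsOfFinOrder x) → Finite H)

theorem rootProp_step {G : Type*} [Group G] (H K : Subgroup G) (hKH : K ≤ H)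
    (hn : (K.subgroupOf H).Normal) (hc : IsCyclic (↥H ⧸ K.subgroupOf H))
    (hK : RootProp K) : RootProp H := by
  have key : ∀ h : H, (QuotientGroup.mk h : ↥H ⧸ K.subgroupOf H) = 1 ↔ (h : G) ∈ K := by
    intro h
    rw [QuotientGroup.eq_one_iff, Subgroup.mem_subgroupOf]
  rcases finite_or_infinite (↥H ⧸ K.subgroupOf H) with hfin | hinf
  · have hr : ∀ h ∈ H, h ^ (Nat.card (↥H ⧸ K.subgroupOf H)) ∈ K := by
      intro h hh
      have := (key (⟨h, hh⟩ ^ (Nat.card (↥H ⧸ K.subgroupOf H)))).1 (by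
        rw [QuotientGroup.mk_pow]; exact pow_card_eq_one')
      simpa using this
    have hr0 : 0 < Nat.card (↥H ⧸ K.subgroupOf H) := Nat.card_pos
    set r := Nat.card (↥H ⧸ K.subgroupOf H)
    refine ⟨fun f hf hfo => ?_, fun ht => ?_⟩
    · refine (hK.1 (f ^ r) (hr f hf) ?_).subset ?_
      · rw [isOfFinOrder_pow]; simp [hfo, hr0.ne']
      · rintro m ⟨y, hy, rfl⟩
        exact ⟨y ^ r, hr y hy, by rw [← pow_mul, ← pow_mul, mul_comm]⟩
    · have : Finite K := hK.2 fun x hx => ht x (hKH hx)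
      have : Finite (K.subgroupOf H) :=
        Finite.of_equiv _ (Subgroup.subgroupOfEquivOfLe hKH).symm.toEquiv
      exact Finite.of_equiv _ (Subgroup.groupEquivQuotientProdSubgroup (s := K.subgroupOf H)).symm
  · obtain ⟨g, hg⟩ := hc.exists_generator
    have hgo : ¬ IsOfFinOrder g := by
      rw [← orderOf_eq_zero_iff]
      exact Infinite.orderOf_eq_zero_of_forall_mem_zpowers hg
    have hinj : Function.Injective fun n : ℤ => g ^ n := injective_zpow_iff_not_isOfFinOrder.2 hgo
    refine ⟨fun f hf hfo => ?_, fun ht => ?_⟩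
    · by_cases hfK : f ∈ K
      · refine (hK.1 f hfK hfo).subset ?_
        rintro m ⟨y, hy, hym⟩
        refine ⟨y, ?_, hym⟩
        have hm : m ≠ 0 := by
          rintro rfl
          exact hfo (by rw [← hym, pow_zero]; exact IsOfFinOrder.one)
        rw [← key ⟨y, hy⟩]
        obtain ⟨k, hk⟩ := hg (QuotientGroup.mk ⟨y, hy⟩)
        have h1 := (key (⟨y, hy⟩ ^ m)).2 (by simpa [hym] using hfK)
        rw [QuotientGroup.mk_pow, ← hk] at h1
        have h2 : g ^ (k * (m : ℤ)) = g ^ (0 : ℤ) := by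
          rw [zpow_mul, zpow_natCast, zpow_zero]; exact h1
        have h3 := hinj h2
        have hk0 : k = 0 := by simpa [hm] using h3
        rw [← hk, hk0]; simp
      · obtain ⟨a, ha⟩ := hg (QuotientGroup.mk ⟨f, hf⟩)
        have ha0 : a ≠ 0 := by
          rintro rfl
          exact hfK ((key ⟨f, hf⟩).1 (by rw [← ha]; simp))
        refine (Set.finite_Iic a.natAbs).subset ?_
        rintro m ⟨y, hy, hym⟩
        obtain ⟨k, hk⟩ := hg (QuotientGroup.mk ⟨y, hy⟩)
        have h1 : (QuotientGroup.mk ((⟨y, hy⟩ : H) ^ m) : ↥H ⧸ K.subgroupOf H)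
            = QuotientGroup.mk ⟨f, hf⟩ := by
          congr 1; exact Subtype.ext hym
        rw [QuotientGroup.mk_pow, ← hk, ← ha] at h1
        have h2 : g ^ (k * (m : ℤ)) = g ^ a := by
          rw [zpow_mul, zpow_natCast]; exact h1
        have h3 : k * (m : ℤ) = a := hinj h2
        refine Nat.le_of_dvd (Int.natAbs_pos.2 ha0) ?_
        rw [← h3, Int.natAbs_mul, Int.natAbs_natCast]
        exact dvd_mul_left _ _
    · exfalso
      obtain ⟨h, rfl⟩ := QuotientGroup.mk_surjective g
      apply hgo
      have : IsOfFinOrder h := by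
        rw [← Submonoid.isOfFinOrder_coe (H := H.toSubmonoid) (x := h)]
        exact ht _ h.2
      exact (QuotientGroup.mk' (K.subgroupOf H)).isOfFinOrder this

theorem rootProp_top {G : Type*} [Group G] (hpoly : IsPolycyclic G) :
    RootProp (⊤ : Subgroup G) := by
  obtain ⟨k, s, h0, hl, hs⟩ := hpoly
  have : ∀ i, RootProp (s i) := by
    intro i
    induction i using Fin.reverseInduction with
    | last =>
      rw [hl]
      refine ⟨fun f hf hfo => ?_, fun _ => inferInstance⟩
      rw [Subgroup.mem_bot] at hf
      exact absurd (hf ▸ IsOfFinOrder.one) hfo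
    | cast i ih =>
      obtain ⟨hle, hn, hc⟩ := hs i
      exact rootProp_step _ _ hle hn hc ih
  rw [← h0]; exact this 0

/-- no automorphism of an infinite discrete polycyclic group acts
expansively on `Sub^c_G`. -/
theorem polycyclic_no_expansive {G : Type*} [Group G] (hpoly : IsPolycyclic G)
    (hinf : Infinite G) (T : MulAut G) :
    ¬ ActsExpansivelyOn T (cyclicSubgroups G) := by
  rintro ⟨W, hW, hdiag, hexp⟩
  obtain ⟨hroot, htors⟩ := rootProp_top hpoly
  have hbot : (⊥ : Subgroup G) ∈ cyclicSubgroups G := ⟨1, by simp⟩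
  obtain ⟨K, hK, h1K, hKW⟩ := nhds_bot_aux {H : Subgroup G | (H, (⊥ : Subgroup G)) ∈ W}
    (hW.preimage (by fun_prop : Continuous fun H : Subgroup G => (H, (⊥ : Subgroup G))))
    (hdiag _ hbot)
  obtain ⟨x, hx⟩ : ∃ x : G, ¬ IsOfFinOrder x := by
    by_contra! h
    have := htors fun x _ => h x
    have : Finite G := Finite.of_equiv _ (Subgroup.topEquiv (G := G)).toEquiv
    exact not_finite G
  have hfin : (insert 0 (⋃ f ∈ {f ∈ K | ¬ IsOfFinOrder f},
      {m : ℕ | ∃ y ∈ (⊤ : Subgroup G), y ^ m = f})).Finite :=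
    ((hK.subset (Set.sep_subset _ _)).biUnion fun f hf => hroot f trivial hf.2).insert 0
  obtain ⟨m, hm⟩ := hfin.exists_notMem
  rw [Set.mem_insert_iff, not_or] at hm
  obtain ⟨hm0, hm⟩ := hm
  have hxm : ¬ IsOfFinOrder (x ^ m) := by rw [isOfFinOrder_pow]; simp [hx, hm0]
  obtain ⟨n, hn⟩ := hexp (Subgroup.zpowers (x ^ m)) ⟨_, rfl⟩ ⊥ hbot (by
    intro h
    rw [Subgroup.zpowers_eq_bot] at h
    exact hxm (h ▸ IsOfFinOrder.one))
  apply hn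
  have hb : autMap T n (⊥ : Subgroup G) = ⊥ := Subgroup.map_bot _
  rw [hb]
  apply hKW
  rw [Set.eq_empty_iff_forall_notMem]
  rintro f ⟨⟨_, ⟨k, rfl⟩, hkf⟩, hfK⟩
  have hkf' : (T ^ n) ((x ^ m) ^ k) = f := hkf
  have hf : ((T ^ n) (x ^ k)) ^ m = f := by
    rw [← hkf', ← map_pow]
    congr 1
    rw [← zpow_natCast, ← zpow_natCast, ← zpow_mul, ← zpow_mul, mul_comm]
  apply hm
  simp only [Set.mem_iUnion]
  refine ⟨f, ⟨hfK, fun hfo => ?_⟩, _, trivial, hf⟩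
  have hk : k ≠ 0 := by
    rintro rfl
    apply h1K
    rw [← hkf'] at hfK
    simpa using hfK
  obtain ⟨j, hj, hj1⟩ := isOfFinOrder_iff_pow_eq_one.1 hfo
  rw [← hkf', ← map_pow, map_eq_one_iff _ (T ^ n).injective] at hj1
  have h3 : (x ^ m) ^ (k * (j : ℤ)) = (x ^ m) ^ (0 : ℤ) := by
    rw [zpow_mul, zpow_natCast, zpow_zero]; exact hj1
  have h4 : k * (j : ℤ) = 0 := injective_zpow_iff_not_isOfFinOrder.2 hxm h3
  rcases mul_eq_zero.1 h4 with h | h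
  · exact hk h
  · omega
end
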